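/- arXiv:2411.00679 — 2 statements merged into one kernel-verified Lean document; each statement's English description precedes it below -/
import Mathlib

section
/- Fix an integer k ≥ 416. Let G be a finite simple graph, L a 10-assignment for G, and α, β two L-colorings of G. Suppose G contains five distinct vertices v1, v2, w1, w2, w3 with edges v1v2, v1w1, v2w1, v2w2, v2w3, w1w2, w2w3, with d_G(v1) = d_G(v2) = 5, d_G(w1) = 7, and d_G(w2) = d_G(w3) = 6. Let S = {v1, v2, w1, w2, w3}. If there exists a k-good recoloring sequence in G − S from the restriction of α to G − S to the restriction of β to G − S, then there exists a k-good recoloring sequence in G from α to β. -/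
def IsLColoring {V : Type} (G : SimpleGraph V) (L : V → Finset ℕ) (φ : V → ℕ) : Prop :=
  (∀ v, φ v ∈ L v) ∧ ∀ ⦃u w : V⦄, G.Adj u w → φ u ≠ φ w

def recolorCount {V : Type} {m : ℕ} (φ : Fin (m + 1) → V → ℕ) (v : V) : ℕ :=
  (Finset.univ.filter fun i : Fin m => φ i.castSucc v ≠ φ i.succ v).card

def IsRecolSeq {V : Type} (G : SimpleGraph V) (L : V → Finset ℕ) {m : ℕ}
    (φ : Fin (m + 1) → V → ℕ) (α β : V → ℕ) : Prop :=
  φ 0 = α ∧ φ (Fin.last m) = β ∧ (∀ i, IsLColoring G L (φ i)) ∧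
    ∀ i : Fin m, ∃! v : V, φ i.castSucc v ≠ φ i.succ v

/-!
A recoloring sequence of `G − S` is extended to the vertices of `S` move by move: when a neighbor of
a new vertex `x` is about to receive the color of `x`, recolor `x` beforehand, avoiding the current
colors of its neighbors and the next `f` colors they are going to receive. Ten colors and `d`
neighbors allow `f = 9 - d`, and then `x` is recolored about once per `f` moves at its neighbors.

First insert `w1`, which has four neighbors outside `S`: about `4k / 5` recolorings suffice, and
this saving pays for everything else. For the adjacent pairs `w2, w3` and `v1, v2`, each vertex has
five neighbors when its partner is counted, but the color of the partner matters only at the times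
of recoloring, so the four others determine the number of recolorings, with `f = 4`. That number
slightly exceeds `k` unless one of the four others is `w1`. The only vertex concerned is `w3`; for
its first six recolorings it ignores the color of `w2`, which moves out of the way, and looks five
colors ahead.
-/

section Moves

variable {V C : Type*} {G : SimpleGraph V} {L : V → Finset C} {A : Set V} {φ ψ χ : V → C}
  {σ τ : List (V × C)} {u v x : V} {c z : C}

/-- `φ` restricts to an `L`-coloring of the subgraph of `G` induced on `A`. Partial colorings are
encoded as total functions whose values off `A` are irrelevant. -/
def IsLColoringOn (G : SimpleGraph V) (L : V → Finset C) (A : Set V) (φ : V → C) : Prop :=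
  (∀ v ∈ A, φ v ∈ L v) ∧ ∀ u ∈ A, ∀ w ∈ A, G.Adj u w → φ u ≠ φ w

/-- The colors that the moves of `σ` give to neighbors of `x`, in order. -/
def neighborColors (G : SimpleGraph V) [DecidableRel G.Adj] (x : V) (σ : List (V × C)) : List C :=
  (σ.filter fun m => G.Adj x m.1).map Prod.snd

lemma neighborColors_cons_of_adj [DecidableRel G.Adj] (h : G.Adj x v) :
    neighborColors G x ((v, c) :: σ) = c :: neighborColors G x σ := by
  simp [neighborColors, h]

lemma neighborColors_cons_of_not_adj [DecidableRel G.Adj] (h : ¬ G.Adj x v) :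
    neighborColors G x ((v, c) :: σ) = neighborColors G x σ := by
  simp [neighborColors, h]

variable [DecidableEq V]

lemma IsLColoringOn.update (h : IsLColoringOn G L A φ) (hz : z ∈ L x)
    (hne : ∀ u ∈ A, G.Adj x u → φ u ≠ z) : IsLColoringOn G L A (Function.update φ x z) := by
  refine ⟨fun v hv => ?_, fun u hu w hw hadj => ?_⟩
  · rcases eq_or_ne v x with rfl | hvx
    · simpa using hz
    · simpa [hvx] using h.1 v hv
  · rcases eq_or_ne u x with rfl | hux
    · simpa [hadj.ne'] using (hne w hw hadj).symm
    rcases eq_or_ne w x with rfl | hwx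
    · simpa [hux] using hne u hu hadj.symm
    · simpa [hux, hwx] using h.2 u hu w hw hadj

/-- `RecolorsBy G L A φ σ ψ`: performing the moves of `σ` one after the other, where the move
`(v, c)` gives color `c` to `v`, turns `φ` into `ψ`; all moves are at vertices of `A` and all
colorings on the way are `L`-colorings on `A`. A move may leave the color of its vertex
unchanged. -/
inductive RecolorsBy (G : SimpleGraph V) (L : V → Finset C) (A : Set V) :
    (V → C) → List (V × C) → (V → C) → Prop
  | nil {φ : V → C} (hφ : IsLColoringOn G L A φ) : RecolorsBy G L A φ [] φ
  | cons {φ ψ : V → C} {v : V} {c : C} {σ : List (V × C)} (hφ : IsLColoringOn G L A φ)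
      (hv : v ∈ A) (h : RecolorsBy G L A (Function.update φ v c) σ ψ) :
      RecolorsBy G L A φ ((v, c) :: σ) ψ

/-- The number of moves of `σ` at each vertex. -/
def moveCount (σ : List (V × C)) : V → ℕ := fun u => (σ.map Prod.fst).count u

@[simp]
lemma moveCount_nil : moveCount ([] : List (V × C)) = 0 := rfl

@[simp]
lemma moveCount_cons : moveCount ((v, c) :: σ) = Pi.single v 1 + moveCount σ := by
  ext u
  simp [moveCount, List.count_cons, Pi.single_apply, add_comm, @eq_comm _ u]

@[simp]
lemma moveCount_append : moveCount (σ ++ τ) = moveCount σ + moveCount τ := by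
  ext u
  simp [moveCount]

namespace RecolorsBy

lemma isLColoringOn_source (h : RecolorsBy G L A φ σ ψ) : IsLColoringOn G L A φ := by
  cases h <;> assumption

lemma isLColoringOn_target (h : RecolorsBy G L A φ σ ψ) : IsLColoringOn G L A ψ := by
  induction h <;> assumption

lemma trans (h : RecolorsBy G L A φ σ ψ) (h' : RecolorsBy G L A ψ τ χ) :
    RecolorsBy G L A φ (σ ++ τ) χ := by
  induction h with
  | nil _ => exact h'
  | cons hφ hv _ ih => exact .cons hφ hv (ih h')

lemma singleton (hφ : IsLColoringOn G L A φ) (hx : x ∈ A) (hz : z ∈ L x)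
    (hne : ∀ u ∈ A, G.Adj x u → φ u ≠ z) :
    RecolorsBy G L A φ [(x, z)] (Function.update φ x z) :=
  .cons hφ hx (.nil (hφ.update hz hne))

lemma singleton_insert (hχ : IsLColoringOn G L (insert x A) χ) {N : Finset V}
    (hN : ∀ u ∈ A, G.Adj x u → u ∈ N) (hz : z ∈ L x) (hzN : ∀ u ∈ N, χ u ≠ z) :
    RecolorsBy G L (insert x A) χ [(x, z)] (Function.update χ x z) := by
  refine .singleton hχ (Set.mem_insert _ _) hz ?_
  rintro u (rfl | hu) hadj
  exacts [(G.irrefl hadj).elim, hzN u (hN u hu hadj)]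

lemma apply_eq_of_moveCount_eq_zero (h : RecolorsBy G L A φ σ ψ) (hu : moveCount σ u = 0) :
    ψ u = φ u := by
  induction h with
  | nil _ => rfl
  | @cons _ _ v _ _ _ _ _ ih =>
    simp only [moveCount_cons, Pi.add_apply, Nat.add_eq_zero_iff] at hu
    rw [ih hu.2, Function.update_of_ne]
    rintro rfl
    simp at hu

lemma moveCount_eq_zero (h : RecolorsBy G L A φ σ ψ) (hu : u ∉ A) : moveCount σ u = 0 := by
  induction h with
  | nil _ => rfl
  | cons _ hv _ ih => simp [ih, (ne_of_mem_of_not_mem hv hu).symm]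

end RecolorsBy

lemma RecolorsBy.length_neighborColors_le [DecidableRel G.Adj] (h : RecolorsBy G L A φ σ ψ)
    {N : Finset V} (hN : ∀ u ∈ A, G.Adj x u → u ∈ N) :
    (neighborColors G x σ).length ≤ ∑ u ∈ N, moveCount σ u := by
  induction h with
  | nil _ => simp [neighborColors]
  | @cons _ _ v _ _ _ hv _ ih =>
    simp only [moveCount_cons, Pi.add_apply, Finset.sum_add_distrib, Finset.sum_pi_single']
    by_cases hadj : G.Adj x v
    · simp only [neighborColors_cons_of_adj hadj, List.length_cons, if_pos (hN v hv hadj)]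
      omega
    · rw [neighborColors_cons_of_not_adj hadj]
      omega

end Moves

section Paced

variable {C : Type*} {r p q b : ℕ} {a a' : C} {F : List C}

/-- The accounting invariant of a vertex that dodges the colors its neighbors are about to receive.
Its present color is `a`, the `b` colors received by its neighbors in total end with those of `F`,
which are still to come, and each of its recolorings has a cost. The invariant says that the amount
`p` spent so far exceeds the number `b - F.length` of past colors by at most a number `ℓ ≤ r` of
upcoming colors known to be harmless. The slack used by `Paced.recolor_arbitrary` also goes into
`b`. -/
def Paced (r p b : ℕ) (a : C) (F : List C) : Prop :=
  ∃ ℓ ≤ r, a ∉ F.take ℓ ∧ p + F.length ≤ b + ℓ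

namespace Paced

lemma init (r : ℕ) (a : C) (F : List C) : Paced r 0 F.length a F :=
  ⟨0, by omega, by simp, by omega⟩

lemma of_cons (h : Paced r p b a (a' :: F)) : Paced r p b a F := by
  obtain ⟨ℓ, hℓ, ha, hp⟩ := h
  rw [List.length_cons] at hp
  cases ℓ with
  | zero => exact ⟨0, hℓ, by simp, by omega⟩
  | succ ℓ => exact ⟨ℓ, by omega, fun h => ha (by simp [h]), by omega⟩

lemma recolor (h : Paced r p b a (a :: F)) (hq : q ≤ r) (ha' : a' ∉ (a :: F).take q) :
    Paced r (p + q) b a' (a :: F) := by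
  obtain ⟨ℓ, -, ha, hp⟩ := h
  have hℓ0 : ℓ = 0 := by
    by_contra hne
    exact ha (by simp [List.take_cons (Nat.pos_of_ne_zero hne)])
  exact ⟨q, hq, ha', by omega⟩

-- One `r` pays for the recoloring, the other makes up for the foresight lost.
lemma recolor_arbitrary (h : Paced r p b a F) (a' : C) : Paced r (p + r) (b + 2 * r) a' F := by
  obtain ⟨ℓ, hℓ, -, hp⟩ := h
  exact ⟨0, by omega, by simp, by omega⟩

lemma spent_le (h : Paced r p b a []) : p ≤ b + r := by
  obtain ⟨ℓ, hℓ, -, hp⟩ := h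
  rw [List.length_nil] at hp
  omega

end Paced

variable {V : Type*} {G : SimpleGraph V} [DecidableRel G.Adj] {σ : List (V × C)} {N : Finset V}
  {x v : V} {c : C}

lemma exists_color_notMem {s : Finset C} (χ : V → C)
    (h : N.card + F.length < s.card) : ∃ z ∈ s, (∀ u ∈ N, χ u ≠ z) ∧ z ∉ F := by
  classical
  have hcard : (N.image χ ∪ F.toFinset).card < s.card :=
    calc (N.image χ ∪ F.toFinset).card ≤ (N.image χ).card + F.toFinset.card :=
          Finset.card_union_le _ _
      _ ≤ N.card + F.length := add_le_add Finset.card_image_le F.toFinset_card_le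
      _ < s.card := h
  obtain ⟨z, hz, hz'⟩ := Finset.exists_mem_notMem_of_card_lt_card hcard
  simp only [Finset.mem_union, Finset.mem_image, List.mem_toFinset, not_or, not_exists,
    not_and] at hz'
  exact ⟨z, hz, hz'.1, hz'.2⟩

lemma Paced.of_neighborColors_cons {a : C} (h : Paced r p b a (neighborColors G x ((v, c) :: σ))) :
    Paced r p b a (neighborColors G x σ) := by
  by_cases hadj : G.Adj x v
  · rw [neighborColors_cons_of_adj hadj] at h
    exact h.of_cons
  · rwa [neighborColors_cons_of_not_adj hadj] at h

lemma Paced.exists_recolor (χ : V → C) (hadj : G.Adj x v)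
    (h : Paced r p b c (neighborColors G x ((v, c) :: σ))) (hq : 0 < q) (hqr : q ≤ r)
    {s : Finset C} (hs : N.card + q < s.card) :
    ∃ z ∈ s, (∀ u ∈ N, χ u ≠ z) ∧ z ≠ c ∧
      Paced r (p + q) b z (neighborColors G x ((v, c) :: σ)) := by
  rw [neighborColors_cons_of_adj hadj] at h ⊢
  obtain ⟨z, hz, hzN, hzF⟩ := exists_color_notMem (s := s) (N := N)
    (F := (c :: neighborColors G x σ).take q) χ
    (by have := List.length_take_le q (c :: neighborColors G x σ); omega)
  refine ⟨z, hz, hzN, ?_, h.recolor hqr hzF⟩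
  rintro rfl
  exact hzF (by simp [List.take_cons hq])

end Paced

section Extension

variable {V C : Type*} [DecidableEq V] {G : SimpleGraph V} {L : V → Finset C} {A B : Set V}
  {φ ψ χ : V → C} {σ : List (V × C)} {n : V → ℕ} {x y v : V} {c : C} {N M : Finset V}

lemma IsLColoringOn.update_of_eqOn (hφ : IsLColoringOn G L A (Function.update φ v c)) (hv : v ∈ A)
    (hχ : IsLColoringOn G L B χ) (hχφ : Set.EqOn χ φ A)
    (hne : ∀ u ∈ B, u ∉ A → G.Adj v u → χ u ≠ c) :
    IsLColoringOn G L B (Function.update χ v c) := by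
  refine hχ.update (by simpa using hφ.1 v hv) fun u hu hadj => ?_
  by_cases huA : u ∈ A
  · simpa [hχφ huA, hadj.ne'] using (hφ.2 v hv u huA hadj).symm
  · exact hne u hu huA hadj

/-- Before the move `(v, c)` of a recoloring sequence on `A` is performed in the coloring `χ` on
`B ⊇ A`, some moves at vertices of `B \ A` lead to a coloring in which the move is harmless and
which satisfies `Q`; the second argument of `Q` is the number of these moves at each vertex. -/
def HasPrelude (G : SimpleGraph V) (L : V → Finset C) (A B : Set V) (χ : V → C) (v : V) (c : C)
    (Q : (V → C) → (V → ℕ) → Prop) : Prop :=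
  ∃ τ χ', RecolorsBy G L B χ τ χ' ∧ (∀ u ∈ A, moveCount τ u = 0) ∧
    (∀ u ∈ B, u ∉ A → G.Adj v u → χ' u ≠ c) ∧ Q χ' (moveCount τ)

lemma RecolorsBy.exists_extension (hAB : A ⊆ B) {I : List (V × C) → (V → C) → (V → ℕ) → Prop}
    (hprelude : ∀ v ∈ A, ∀ c σ χ n, IsLColoringOn G L B χ → I ((v, c) :: σ) χ n →
      HasPrelude G L A B χ v c fun χ' k => I ((v, c) :: σ) χ' (n + k))
    (hmove : ∀ v ∈ A, ∀ c σ χ n, I ((v, c) :: σ) χ n →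
      I σ (Function.update χ v c) (n + Pi.single v 1))
    (h : RecolorsBy G L A φ σ ψ) (hχ : IsLColoringOn G L B χ) (hχφ : Set.EqOn χ φ A)
    (hI : I σ χ n) :
    ∃ σ' ψ', RecolorsBy G L B χ σ' ψ' ∧ Set.EqOn ψ' ψ A ∧
      (∀ u ∈ A, moveCount σ' u = moveCount σ u) ∧ I [] ψ' (n + moveCount σ') := by
  induction h generalizing χ n with
  | nil _ => exact ⟨[], χ, .nil hχ, hχφ, fun _ _ => rfl, by simpa using hI⟩
  | @cons φ ψ v c σ _ hv h ih =>
    obtain ⟨τ, χ', hτ, hτA, hne, hI'⟩ := hprelude v hv c σ χ n hχ hI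
    have hχ'φ : Set.EqOn χ' φ A := fun u hu =>
      (hτ.apply_eq_of_moveCount_eq_zero (hτA u hu)).trans (hχφ hu)
    have hupdate : IsLColoringOn G L B (Function.update χ' v c) :=
      h.isLColoringOn_source.update_of_eqOn hv hτ.isLColoringOn_target hχ'φ hne
    have heqOn : Set.EqOn (Function.update χ' v c) (Function.update φ v c) A := fun u hu => by
      simp only [Function.update_apply, hχ'φ hu]
    obtain ⟨σ', ψ', hσ', hψ', hcount, hI''⟩ := ih hupdate heqOn (hmove v hv c σ χ' _ hI')
    refine ⟨τ ++ (v, c) :: σ', ψ', hτ.trans (.cons hτ.isLColoringOn_target (hAB hv) hσ'), hψ',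
      fun u hu => ?_, ?_⟩
    · simp [hτA u hu, hcount u hu]
    · simpa [add_assoc] using hI''

lemma forall_adj_mem_insert (hN : ∀ u ∈ A, G.Adj x u → u ∈ N) :
    ∀ u ∈ insert y A, G.Adj x u → u ∈ insert y N := by
  rintro u (rfl | hu) hadj
  exacts [Finset.mem_insert_self _ _, Finset.mem_insert_of_mem (hN u hu hadj)]

variable [DecidableRel G.Adj] {b b' f g t : ℕ}

lemma hasPrelude_insert (hx : x ∉ A) (hN : ∀ u ∈ A, G.Adj x u → u ∈ N)
    (hf : 0 < f) (hL : N.card + f < (L x).card) (hχ : IsLColoringOn G L (insert x A) χ)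
    (hI : Paced f (f * n x) b (χ x) (neighborColors G x ((v, c) :: σ))) :
    HasPrelude G L A (insert x A) χ v c fun χ' k =>
      Paced f (f * (n + k) x) b (χ' x) (neighborColors G x ((v, c) :: σ)) := by
  by_cases hconflict : G.Adj x v ∧ χ x = c
  · obtain ⟨hadj, rfl⟩ := hconflict
    obtain ⟨z, hz, hzN, hzc, hpaced⟩ := hI.exists_recolor χ hadj hf le_rfl hL
    refine ⟨_, _, .singleton_insert hχ hN hz hzN, fun u hu => ?_, ?_, ?_⟩
    · simp [ne_of_mem_of_not_mem hu hx]
    · rintro u (rfl | hu) huA -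
      exacts [by simpa using hzc, (huA hu).elim]
    · simpa [mul_add] using hpaced
  · refine ⟨[], χ, .nil hχ, by simp, ?_, by simpa using hI⟩
    rintro u (rfl | hu) huA hadj
    exacts [fun h => hconflict ⟨hadj.symm, h⟩, (huA hu).elim]

/-- The invariant for two adjacent new vertices `x` and `y`. The first `t` recolorings of `y` ignore
the color of `x`, which moves out of the way if necessary, and this lets `y` look one color further
ahead. -/
def PairPaced (G : SimpleGraph V) [DecidableRel G.Adj] (f g t b b' : ℕ) (x y : V)
    (σ : List (V × C)) (χ : V → C) (n : V → ℕ) : Prop :=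
  Paced f (f * n x) (b + 2 * f * min (n y) t) (χ x) (neighborColors G x σ) ∧
    Paced (g + 1) (g * n y + min (n y) t) b' (χ y) (neighborColors G y σ)

lemma PairPaced.hasPrelude_recolor_left (hx : x ∉ A) (hxy : G.Adj x y)
    (hN : ∀ u ∈ A, G.Adj x u → u ∈ N) (hf : 0 < f) (hL : N.card + f + 1 < (L x).card)
    (hχ : IsLColoringOn G L (insert x (insert y A)) χ)
    (hI : PairPaced G f g t b b' x y ((v, c) :: σ) χ n) (hadj : G.Adj x v) (hconflict : χ x = c) :
    HasPrelude G L A (insert x (insert y A)) χ v c fun χ' k =>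
      PairPaced G f g t b b' x y ((v, c) :: σ) χ' (n + k) := by
  subst hconflict
  have hcard := Finset.card_insert_le y N
  obtain ⟨z, hz, hzN, hzc, hpaced⟩ := hI.1.exists_recolor (N := insert y N) χ hadj hf le_rfl
    (s := L x) (by omega)
  refine ⟨_, _, .singleton_insert hχ (forall_adj_mem_insert hN) hz hzN, fun u hu => ?_, ?_, ?_, ?_⟩
  · simp [ne_of_mem_of_not_mem hu hx]
  · rintro u (rfl | rfl | hu) huA -
    · simpa using hzc
    · simpa [hxy.ne'] using (hχ.2 x (by simp) u (by simp) hxy).symm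
    · exact (huA hu).elim
  · simpa [hxy.ne', mul_add] using hpaced
  · simpa [hxy.ne'] using hI.2

lemma PairPaced.hasPrelude_recolor_right (hy : y ∉ A) (hxy : G.Adj x y)
    (hM : ∀ u ∈ A, G.Adj y u → u ∈ M) (hg : 0 < g) (hL : M.card + g + 1 < (L y).card)
    (hχ : IsLColoringOn G L (insert x (insert y A)) χ)
    (hI : PairPaced G f g t b b' x y ((v, c) :: σ) χ n) (ht : t ≤ n y)
    (hadj : G.Adj y v) (hconflict : χ y = c) :
    HasPrelude G L A (insert x (insert y A)) χ v c fun χ' k =>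
      PairPaced G f g t b b' x y ((v, c) :: σ) χ' (n + k) := by
  subst hconflict
  have hcard := Finset.card_insert_le x M
  obtain ⟨z, hz, hzM, hzc, hpaced⟩ := hI.2.exists_recolor (N := insert x M) χ hadj hg
    (Nat.le_succ g) (s := L y) (by omega)
  have hstep : RecolorsBy G L (insert x (insert y A)) χ [(y, z)] (Function.update χ y z) := by
    rw [Set.insert_comm] at hχ ⊢
    exact .singleton_insert hχ (forall_adj_mem_insert hM) hz hzM
  refine ⟨_, _, hstep, fun u hu => ?_, ?_, ?_, ?_⟩
  · simp [ne_of_mem_of_not_mem hu hy]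
  · rintro u (rfl | rfl | hu) huA -
    · simpa [hxy.ne] using hχ.2 u (by simp) y (by simp) hxy
    · simpa using hzc
    · exact (huA hu).elim
  · simpa [hxy.ne, ht, Nat.le_succ_of_le ht] using hI.1
  · simpa [mul_add, ht, Nat.le_succ_of_le ht, add_right_comm] using hpaced

lemma PairPaced.hasPrelude_recolor_both (hx : x ∉ A) (hy : y ∉ A) (hxy : G.Adj x y)
    (hN : ∀ u ∈ A, G.Adj x u → u ∈ N) (hM : ∀ u ∈ A, G.Adj y u → u ∈ M)
    (hLx : N.card + 3 < (L x).card) (hLy : M.card + g + 1 < (L y).card)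
    (hχ : IsLColoringOn G L (insert x (insert y A)) χ)
    (hI : PairPaced G f g t b b' x y ((v, c) :: σ) χ n) (ht : n y < t)
    (hadj : G.Adj y v) (hconflict : χ y = c) :
    HasPrelude G L A (insert x (insert y A)) χ v c fun χ' k =>
      PairPaced G f g t b b' x y ((v, c) :: σ) χ' (n + k) := by
  subst hconflict
  obtain ⟨z, hz, hzM, hzc, hpaced⟩ := hI.2.exists_recolor (N := M) χ hadj (Nat.succ_pos g) le_rfl
    (s := L y) (by omega)
  have hcard := Finset.card_insert_le y N
  obtain ⟨z', hz', hzN', hzz'⟩ := exists_color_notMem (s := L x) (N := insert y N) (F := [z, χ y]) χ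
    (by simp only [List.length_cons, List.length_nil]; omega)
  simp only [List.mem_cons, List.not_mem_nil, or_false, not_or] at hzz'
  have hstepx : RecolorsBy G L (insert x (insert y A)) χ [(x, z')] (Function.update χ x z') :=
    .singleton_insert hχ (forall_adj_mem_insert hN) hz' hzN'
  have hstepy : RecolorsBy G L (insert x (insert y A)) (Function.update χ x z') [(y, z)]
      (Function.update (Function.update χ x z') y z) := by
    refine .singleton hstepx.isLColoringOn_target (by simp) hz ?_
    rintro u (rfl | rfl | hu) hadj
    · simpa using hzz'.1
    · exact (G.irrefl hadj).elim
    · simpa [ne_of_mem_of_not_mem hu hx] using hzM u (hM u hu hadj)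
  refine ⟨_, _, hstepx.trans hstepy, fun u hu => ?_, ?_, ?_, ?_⟩
  · simp [ne_of_mem_of_not_mem hu hx, ne_of_mem_of_not_mem hu hy]
  · rintro u (rfl | rfl | hu) huA -
    · simpa [hxy.ne] using hzz'.2
    · simpa using hzc
    · exact (huA hu).elim
  · have hx' := hI.1.recolor_arbitrary z'
    simpa [hxy.ne, hxy.ne', min_eq_left ht.le, min_eq_left (Nat.succ_le_of_lt ht), mul_add,
      add_assoc] using hx'
  · simpa [hxy.ne, hxy.ne', min_eq_left ht.le, min_eq_left (Nat.succ_le_of_lt ht), mul_add,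
      add_assoc, add_comm, add_left_comm] using hpaced

lemma PairPaced.hasPrelude (hx : x ∉ A) (hy : y ∉ A) (hxy : G.Adj x y)
    (hN : ∀ u ∈ A, G.Adj x u → u ∈ N) (hM : ∀ u ∈ A, G.Adj y u → u ∈ M)
    (hf : 2 ≤ f) (hg : 0 < g)
    (hLx : N.card + f + 1 < (L x).card) (hLy : M.card + g + 1 < (L y).card)
    (hχ : IsLColoringOn G L (insert x (insert y A)) χ)
    (hI : PairPaced G f g t b b' x y ((v, c) :: σ) χ n) :
    HasPrelude G L A (insert x (insert y A)) χ v c fun χ' k =>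
      PairPaced G f g t b b' x y ((v, c) :: σ) χ' (n + k) := by
  by_cases hconflictx : G.Adj x v ∧ χ x = c
  · exact hI.hasPrelude_recolor_left hx hxy hN (by omega) hLx hχ hconflictx.1 hconflictx.2
  by_cases hconflicty : G.Adj y v ∧ χ y = c
  · rcases lt_or_ge (n y) t with ht | ht
    · exact hI.hasPrelude_recolor_both hx hy hxy hN hM (by omega) hLy hχ ht hconflicty.1
        hconflicty.2
    · exact hI.hasPrelude_recolor_right hy hxy hM hg hLy hχ ht hconflicty.1 hconflicty.2
  · refine ⟨[], χ, .nil hχ, by simp, ?_, by simpa using hI⟩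
    rintro u (rfl | rfl | hu) huA hadj
    exacts [fun h => hconflictx ⟨hadj.symm, h⟩, fun h => hconflicty ⟨hadj.symm, h⟩, (huA hu).elim]

end Extension

section Recolorable

variable {V C : Type*} [DecidableEq V] {G : SimpleGraph V} {L : V → Finset C}
  {A : Set V} {α β φ ψ : V → C} {σ : List (V × C)} {k : V → ℕ} {x y : V} {N M : Finset V} {f g : ℕ}

lemma RecolorsBy.exists_insert [DecidableRel G.Adj] (h : RecolorsBy G L A φ σ ψ) (hx : x ∉ A)
    (hN : ∀ u ∈ A, G.Adj x u → u ∈ N) (hf : 0 < f) (hL : N.card + f < (L x).card)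
    (hφ : IsLColoringOn G L (insert x A) φ) :
    ∃ σ' ψ', RecolorsBy G L (insert x A) φ σ' ψ' ∧ Set.EqOn ψ' ψ A ∧
      (∀ u ∈ A, moveCount σ' u = moveCount σ u) ∧
      f * moveCount σ' x ≤ (neighborColors G x σ).length + f := by
  obtain ⟨σ', ψ', hσ', hψ', hcount, hpaced⟩ := h.exists_extension (Set.subset_insert x A)
    (I := fun σ' χ n => Paced f (f * n x) (neighborColors G x σ).length (χ x)
      (neighborColors G x σ'))
    (n := 0) (fun _ _ _ _ _ _ hχ hI => hasPrelude_insert hx hN hf hL hχ hI)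
    (fun v hv _ _ _ _ hI => by
      simpa [(ne_of_mem_of_not_mem hv hx).symm] using hI.of_neighborColors_cons)
    hφ (Set.eqOn_refl _ _) (Paced.init _ _ _)
  exact ⟨σ', ψ', hσ', hψ', hcount, by simpa using hpaced.spent_le⟩

lemma RecolorsBy.exists_insert_pair [DecidableRel G.Adj] (h : RecolorsBy G L A φ σ ψ)
    (hx : x ∉ A) (hy : y ∉ A) (hxy : G.Adj x y)
    (hN : ∀ u ∈ A, G.Adj x u → u ∈ N) (hM : ∀ u ∈ A, G.Adj y u → u ∈ M)
    (hf : 2 ≤ f) (hg : 0 < g)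
    (hLx : N.card + f + 1 < (L x).card) (hLy : M.card + g + 1 < (L y).card)
    (hφ : IsLColoringOn G L (insert x (insert y A)) φ) (t : ℕ) :
    ∃ σ' ψ', RecolorsBy G L (insert x (insert y A)) φ σ' ψ' ∧ Set.EqOn ψ' ψ A ∧
      (∀ u ∈ A, moveCount σ' u = moveCount σ u) ∧
      f * moveCount σ' x ≤ (neighborColors G x σ).length + 2 * f * min (moveCount σ' y) t + f ∧
      g * moveCount σ' y + min (moveCount σ' y) t ≤ (neighborColors G y σ).length + (g + 1) := by
  obtain ⟨σ', ψ', hσ', hψ', hcount, hpaced⟩ := h.exists_extension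
    ((Set.subset_insert y A).trans (Set.subset_insert x _))
    (I := PairPaced G f g t (neighborColors G x σ).length (neighborColors G y σ).length x y)
    (n := 0)
    (fun _ _ _ _ _ _ hχ hI => hI.hasPrelude hx hy hxy hN hM hf hg hLx hLy hχ)
    (fun v hv _ _ _ _ hI => by
      have hvx := (ne_of_mem_of_not_mem hv hx).symm
      have hvy := (ne_of_mem_of_not_mem hv hy).symm
      exact ⟨by simpa [hvx, hvy] using hI.1.of_neighborColors_cons,
        by simpa [hvy] using hI.2.of_neighborColors_cons⟩)
    hφ (Set.eqOn_refl _ _)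
    ⟨by simpa using Paced.init _ _ _, by simpa using Paced.init _ _ _⟩
  exact ⟨σ', ψ', hσ', hψ', hcount, by simpa using hpaced.1.spent_le,
    by simpa using hpaced.2.spent_le⟩

lemma RecolorsBy.insert_of_eqOn (hφ : IsLColoringOn G L (insert x A) φ)
    (hβ : IsLColoringOn G L (insert x A) β) (hx : x ∉ A) (hφβ : Set.EqOn φ β A) :
    RecolorsBy G L (insert x A) φ [(x, β x)] (Function.update φ x (β x)) ∧
      Set.EqOn (Function.update φ x (β x)) β (insert x A) := by
  refine ⟨.singleton hφ (.inl rfl) (hβ.1 x (.inl rfl)) ?_, ?_⟩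
  · rintro u (rfl | hu) hadj
    · exact (G.irrefl hadj).elim
    · rw [hφβ hu]
      exact hβ.2 u (.inr hu) x (.inl rfl) hadj.symm
  · rintro u (rfl | hu)
    · simp
    · simpa [ne_of_mem_of_not_mem hu hx] using hφβ hu

-- `x` first makes room for `y` by taking a color different from `β y`.
lemma RecolorsBy.exists_insert_pair_of_eqOn (hφ : IsLColoringOn G L (insert x (insert y A)) φ)
    (hβ : IsLColoringOn G L (insert x (insert y A)) β) (hx : x ∉ A) (hy : y ∉ A) (hxy : G.Adj x y)
    (hN : ∀ u ∈ A, G.Adj x u → u ∈ N) (hL : N.card + 2 < (L x).card) (hφβ : Set.EqOn φ β A) :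
    ∃ τ ψ, RecolorsBy G L (insert x (insert y A)) φ τ ψ ∧
      Set.EqOn ψ β (insert x (insert y A)) ∧ moveCount τ = Pi.single x 2 + Pi.single y 1 := by
  have hcard := Finset.card_insert_le y N
  obtain ⟨z, hz, hzN, hzy⟩ := exists_color_notMem (s := L x) (N := insert y N) (F := [β y]) φ
    (by rw [List.length_singleton]; omega)
  have hstepx : RecolorsBy G L (insert x (insert y A)) φ [(x, z)] (Function.update φ x z) :=
    .singleton_insert hφ (forall_adj_mem_insert hN) hz hzN
  have hφ'β : Set.EqOn (Function.update φ x z) β A := fun u hu => by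
    simpa [ne_of_mem_of_not_mem hu hx] using hφβ hu
  have hstepy : RecolorsBy G L (insert x (insert y A)) (Function.update φ x z) [(y, β y)]
      (Function.update (Function.update φ x z) y (β y)) := by
    refine .singleton hstepx.isLColoringOn_target (by simp) (hβ.1 y (by simp)) ?_
    rintro u (rfl | rfl | hu) hadj
    · simpa [eq_comm] using hzy
    · exact (G.irrefl hadj).elim
    · rw [hφ'β hu]
      exact hβ.2 u (by simp [hu]) y (by simp) hadj.symm
  have hφ''β : Set.EqOn (Function.update (Function.update φ x z) y (β y)) β (insert y A) := by
    rintro u (rfl | hu)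
    · simp
    · simpa [ne_of_mem_of_not_mem hu hy] using hφ'β hu
  obtain ⟨hstepx', hψ⟩ := insert_of_eqOn hstepy.isLColoringOn_target hβ
    (by simp [hxy.ne, hx]) hφ''β
  refine ⟨_, _, (hstepx.trans hstepy).trans hstepx', hψ, ?_⟩
  ext u
  simp only [moveCount_append, moveCount_cons, moveCount_nil, Pi.add_apply, Pi.single_apply,
    Pi.zero_apply]
  split_ifs <;> rfl

/-- There is a recoloring sequence on `A` from `α` to `β` that recolors each vertex `u` at most
`k u` times. -/
def RecolorableWithin (G : SimpleGraph V) (L : V → Finset C) (A : Set V) (α β : V → C)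
    (k : V → ℕ) : Prop :=
  ∃ σ ψ, RecolorsBy G L A α σ ψ ∧ Set.EqOn ψ β A ∧ ∀ u, moveCount σ u ≤ k u

theorem RecolorableWithin.insert_vertex (h : RecolorableWithin G L A α β k) (hx : x ∉ A)
    (hα : IsLColoringOn G L (insert x A) α) (hβ : IsLColoringOn G L (insert x A) β)
    (hN : ∀ u ∈ A, G.Adj x u → u ∈ N) (hL : N.card + f < (L x).card)
    (hk : ∑ u ∈ N, k u + 2 * f < f * (k x + 1)) :
    RecolorableWithin G L (insert x A) α β k := by
  classical
  obtain ⟨σ, ψ, hσ, hψ, hσk⟩ := h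
  have hf : 0 < f := Nat.pos_of_ne_zero fun h0 => by simp [h0] at hk
  obtain ⟨σ', ψ', hσ', hψ', hcount, hcountx⟩ := hσ.exists_insert hx hN hf hL hα
  obtain ⟨hlast, hlastβ⟩ :=
    RecolorsBy.insert_of_eqOn hσ'.isLColoringOn_target hβ hx (hψ'.trans hψ)
  have hboundx : moveCount σ' x + 1 ≤ k x := by
    have hlength := (hσ.length_neighborColors_le hN).trans (Finset.sum_le_sum fun u _ => hσk u)
    have : f * (moveCount σ' x + 1) < f * (k x + 1) := by rw [mul_add]; omega
    exact Nat.le_of_lt_succ (Nat.lt_of_mul_lt_mul_left this)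
  refine ⟨_, _, hσ'.trans hlast, hlastβ, fun u => ?_⟩
  rcases eq_or_ne u x with rfl | hux
  · simpa using hboundx
  by_cases huA : u ∈ A
  · simpa [hux, hcount u huA] using hσk u
  · simp [hσ'.moveCount_eq_zero (u := u) (by simp [huA, hux]), hux]

theorem RecolorableWithin.insert_pair (h : RecolorableWithin G L A α β k)
    (hx : x ∉ A) (hy : y ∉ A) (hxy : G.Adj x y)
    (hα : IsLColoringOn G L (insert x (insert y A)) α)
    (hβ : IsLColoringOn G L (insert x (insert y A)) β)
    (hN : ∀ u ∈ A, G.Adj x u → u ∈ N) (hM : ∀ u ∈ A, G.Adj y u → u ∈ M)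
    (hf : 2 ≤ f) (hg : 0 < g)
    (hLx : N.card + f + 1 < (L x).card) (hLy : M.card + g + 1 < (L y).card)
    (t : ℕ) (ht : t ≤ k y)
    (hkx : ∑ u ∈ N, k u + (3 + 2 * t) * f < f * (k x + 1))
    (hky : ∑ u ∈ M, k u + 2 * g + 1 < g * (k y + 1) + t) :
    RecolorableWithin G L (insert x (insert y A)) α β k := by
  classical
  obtain ⟨σ, ψ, hσ, hψ, hσk⟩ := h
  obtain ⟨σ', ψ', hσ', hψ', hcount, hcountx, hcounty⟩ :=
    hσ.exists_insert_pair hx hy hxy hN hM hf hg hLx hLy hα t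
  obtain ⟨τ, ψ'', hτ, hψ'', hcountτ⟩ := RecolorsBy.exists_insert_pair_of_eqOn
    hσ'.isLColoringOn_target hβ hx hy hxy hN (by omega) (hψ'.trans hψ)
  have hboundx : moveCount σ' x + 2 ≤ k x := by
    have hlength := (hσ.length_neighborColors_le hN).trans (Finset.sum_le_sum fun u _ => hσk u)
    have hmin : 2 * f * min (moveCount σ' y) t ≤ 2 * f * t :=
      Nat.mul_le_mul_left _ (min_le_right _ _)
    have : f * (moveCount σ' x + 2) < f * (k x + 1) := by linarith
    exact Nat.le_of_lt_succ (Nat.lt_of_mul_lt_mul_left this)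
  have hboundy : moveCount σ' y + 1 ≤ k y := by
    rcases lt_or_ge (moveCount σ' y) t with hlt | hge
    · omega
    have hlength := (hσ.length_neighborColors_le hM).trans (Finset.sum_le_sum fun u _ => hσk u)
    rw [min_eq_right hge] at hcounty
    have : g * (moveCount σ' y + 1) < g * (k y + 1) := by linarith
    exact Nat.le_of_lt_succ (Nat.lt_of_mul_lt_mul_left this)
  refine ⟨_, _, hσ'.trans hτ, hψ'', fun u => ?_⟩
  rw [moveCount_append, hcountτ]
  rcases eq_or_ne u x with rfl | hux
  · simpa [hxy.ne] using hboundx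
  rcases eq_or_ne u y with rfl | huy
  · simpa [hux] using hboundy
  by_cases huA : u ∈ A
  · simpa [hux, huy, hcount u huA] using hσk u
  · simp [hσ'.moveCount_eq_zero (u := u) (by simp [huA, hux, huy]), hux, huy]

end Recolorable

section Sequences

variable {V : Type} {G : SimpleGraph V} {L : V → Finset ℕ} {A : Set V} {α β φ ψ : V → ℕ} {m : ℕ}

lemma IsLColoring.isLColoringOn (h : IsLColoring G L φ) (A : Set V) : IsLColoringOn G L A φ :=
  ⟨fun v _ => h.1 v, fun _ _ _ _ hadj => h.2 hadj⟩

lemma isLColoringOn_univ : IsLColoringOn G L Set.univ φ ↔ IsLColoring G L φ := by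
  simp [IsLColoringOn, IsLColoring]

lemma isLColoring_induce_iff :
    IsLColoring (G.induce A) (fun u => L u) (fun u => φ u) ↔ IsLColoringOn G L A φ := by
  simp [IsLColoringOn, IsLColoring]

lemma existsUnique_ne_iff_exists_update {ι M : Type*} [DecidableEq ι] {f g : ι → M} :
    (∃! i, f i ≠ g i) ↔ ∃ i c, f i ≠ c ∧ g = Function.update f i c := by
  constructor
  · rintro ⟨i, hi, hunique⟩
    refine ⟨i, g i, hi, Function.eq_update_iff.2 ⟨rfl, fun j hji => ?_⟩⟩
    exact (not_not.1 (mt (hunique j) hji)).symm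
  · rintro ⟨i, c, hi, rfl⟩
    refine ⟨i, by simpa using hi, fun j hj => ?_⟩
    by_contra hji
    simp [hji] at hj

lemma recolorCount_cons {ψ : Fin (m + 1) → V → ℕ} {v : V} :
    recolorCount (Fin.cons φ ψ : Fin (m + 2) → V → ℕ) v =
      (if φ v ≠ ψ 0 v then 1 else 0) + recolorCount ψ v := by
  simp only [recolorCount, Finset.card_filter, Fin.sum_univ_succ, Fin.castSucc_zero,
    ← Fin.succ_castSucc, Fin.cons_zero, Fin.cons_succ]

lemma isRecolSeq_cons_iff {ψ : Fin (m + 1) → V → ℕ} :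
    IsRecolSeq G L (Fin.cons φ ψ : Fin (m + 2) → V → ℕ) α β ↔
      φ = α ∧ IsLColoring G L φ ∧ (∃! v, φ v ≠ ψ 0 v) ∧ IsRecolSeq G L ψ (ψ 0) β := by
  simp only [IsRecolSeq, Fin.forall_fin_succ (n := m + 1), Fin.forall_fin_succ (n := m),
    Fin.castSucc_zero, ← Fin.succ_castSucc, Fin.cons_zero, Fin.cons_succ, ← Fin.succ_last]
  tauto

variable [DecidableEq V] {σ : List (V × ℕ)}

lemma RecolorsBy.exists_isRecolSeq (h : RecolorsBy G L Set.univ φ σ ψ) :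
    ∃ (m : ℕ) (ψs : Fin (m + 1) → V → ℕ),
      IsRecolSeq G L ψs φ ψ ∧ ∀ u, recolorCount ψs u ≤ moveCount σ u := by
  induction h with
  | @nil φ hφ =>
    exact ⟨0, fun _ => φ, ⟨rfl, rfl, fun _ => isLColoringOn_univ.1 hφ, fun i => i.elim0⟩,
      fun u => by simp [recolorCount]⟩
  | @cons φ ψ v c σ hφ _ _ ih =>
    obtain ⟨m, ψs, hψs, hcount⟩ := ih
    have hzero : ψs 0 = Function.update φ v c := hψs.1
    rcases eq_or_ne (φ v) c with rfl | hne
    · rw [Function.update_eq_self] at hψs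
      exact ⟨m, ψs, hψs, fun u => (hcount u).trans (by simp)⟩
    · refine ⟨m + 1, Fin.cons φ ψs, isRecolSeq_cons_iff.2 ⟨rfl, isLColoringOn_univ.1 hφ, ?_, ?_⟩,
        fun u => ?_⟩
      · exact existsUnique_ne_iff_exists_update.2 ⟨v, c, hne, hzero⟩
      · rwa [hzero]
      · rw [recolorCount_cons, moveCount_cons, hzero]
        refine add_le_add ?_ (hcount u)
        rcases eq_or_ne u v with rfl | huv
        · simp [hne]
        · simp [huv]

lemma IsRecolSeq.exists_recolorsBy {φs : Fin (m + 1) → A → ℕ}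
    (h : IsRecolSeq (G.induce A) (fun u => L u) φs (fun u => α u) (fun u => β u)) :
    ∃ σ ψ, RecolorsBy G L A α σ ψ ∧ Set.EqOn ψ β A ∧
      ∀ u : A, moveCount σ u = recolorCount φs u := by
  induction m generalizing α with
  | zero =>
    obtain ⟨hfirst, hlast, hcol, -⟩ := h
    refine ⟨[], α, .nil (isLColoring_induce_iff.1 (hfirst ▸ hcol 0)), fun u hu => ?_,
      fun u => by simp [recolorCount]⟩
    exact congrFun (hfirst.symm.trans hlast) ⟨u, hu⟩
  | succ m ih =>
    obtain ⟨φ, φs, rfl⟩ : ∃ φ φs', φs = Fin.cons φ φs' := ⟨_, _, (Fin.cons_self_tail φs).symm⟩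
    obtain ⟨rfl, hα, hstep, hφs⟩ := isRecolSeq_cons_iff.1 h
    obtain ⟨v, c, hne, hzero⟩ := existsUnique_ne_iff_exists_update.1 hstep
    have hzero' : φs 0 = fun u : A => Function.update α v c u :=
      hzero.trans (Function.update_comp_eq_of_injective α Subtype.val_injective v c).symm
    obtain ⟨σ, ψ, hσ, hψ, hcount⟩ := ih (hzero' ▸ hφs)
    refine ⟨(v, c) :: σ, ψ, .cons (isLColoring_induce_iff.1 hα) v.2 hσ, hψ, fun u => ?_⟩
    rw [recolorCount_cons, moveCount_cons, Pi.add_apply, hcount, hzero]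
    rcases eq_or_ne u v with rfl | huv
    · simpa using hne
    · simp [huv, Subtype.coe_ne_coe.2 huv]

lemma IsRecolSeq.recolorableWithin {k : V → ℕ} {φs : Fin (m + 1) → A → ℕ}
    (h : IsRecolSeq (G.induce A) (fun u => L u) φs (fun u => α u) (fun u => β u))
    (hk : ∀ u : A, recolorCount φs u ≤ k u) : RecolorableWithin G L A α β k := by
  obtain ⟨σ, ψ, hσ, hψ, hcount⟩ := h.exists_recolorsBy
  refine ⟨σ, ψ, hσ, hψ, fun u => ?_⟩
  by_cases hu : u ∈ A
  · exact (hcount ⟨u, hu⟩).trans_le (hk ⟨u, hu⟩)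
  · simp [hσ.moveCount_eq_zero hu]

lemma RecolorableWithin.exists_isRecolSeq {k : V → ℕ}
    (h : RecolorableWithin G L Set.univ α β k) :
    ∃ (m : ℕ) (ψs : Fin (m + 1) → V → ℕ),
      IsRecolSeq G L ψs α β ∧ ∀ u, recolorCount ψs u ≤ k u := by
  obtain ⟨σ, ψ, hσ, hψ, hσk⟩ := h
  obtain rfl : ψ = β := Set.eqOn_univ ψ β |>.1 hψ
  obtain ⟨m, ψs, hψs, hcount⟩ := hσ.exists_isRecolSeq
  exact ⟨m, ψs, hψs, fun u => (hcount u).trans (hσk u)⟩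

end Sequences

section Budget

variable {V C : Type*} {G : SimpleGraph V} {L : V → Finset C} {A : Set V} {α β : V → C}
  {k d : ℕ} {w x y : V} {N : Finset V}

lemma exists_finset_neighbors_of_encard_le (h : (G.neighborSet x ∩ A).encard ≤ d) :
    ∃ N : Finset V, N.card ≤ d ∧ ∀ u ∈ A, G.Adj x u → u ∈ N := by
  have hfin := Set.finite_of_encard_le_coe h
  rw [hfin.encard_eq_coe_toFinset_card] at h
  exact ⟨hfin.toFinset, by exact_mod_cast h, fun u hu hadj => hfin.mem_toFinset.2 ⟨hadj, hu⟩⟩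

lemma encard_neighborSet_inter_le [Fintype (G.neighborSet x)] (D : Finset V)
    (hadj : ∀ u ∈ D, G.Adj x u) (hA : ∀ u ∈ D, u ∉ A) (hd : G.degree x ≤ d + D.card) :
    (G.neighborSet x ∩ A).encard ≤ d := by
  classical
  have hD : D ⊆ G.neighborFinset x := fun u hu => (G.mem_neighborFinset x u).2 (hadj u hu)
  have hsub : G.neighborSet x ∩ A ⊆ ↑(G.neighborFinset x \ D) := fun u hu =>
    Finset.mem_sdiff.2 ⟨(G.mem_neighborFinset x u).2 hu.1, fun huD => hA u huD hu.2⟩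
  refine (Set.encard_le_encard hsub).trans ?_
  rw [Set.encard_coe_eq_coe_finsetCard, Finset.card_sdiff_of_subset hD,
    G.card_neighborFinset_eq_degree]
  exact_mod_cast (by omega : G.degree x - D.card ≤ d)

variable [DecidableEq V]

/-- The number of recolorings allowed at each vertex: `k`, except at the vertex `w`, which has at
most four neighbors when it is inserted and therefore needs only about `4 * k / 5`. -/
def budget (k : ℕ) (w : V) : V → ℕ := Function.update (fun _ => k) w (4 * k / 5 + 2)

lemma budget_self : budget k w w = 4 * k / 5 + 2 := Function.update_self ..

lemma budget_of_ne (h : x ≠ w) : budget k w x = k := Function.update_of_ne h ..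

lemma budget_le (hk : 10 ≤ k) : budget k w x ≤ k := by
  rcases eq_or_ne x w with rfl | h
  · rw [budget_self]
    omega
  · rw [budget_of_ne h]

lemma sum_budget_le (hk : 10 ≤ k) (hN : N.card ≤ d) : ∑ u ∈ N, budget k w u ≤ d * k :=
  (N.sum_le_card_nsmul _ _ fun _ _ => budget_le hk).trans (Nat.mul_le_mul_right k hN)

lemma sum_budget_le_of_mem (hw : w ∈ N) (hN : N.card ≤ d + 1) :
    ∑ u ∈ N, budget k w u ≤ 4 * k / 5 + 2 + d * k := by
  rw [budget, Finset.sum_update_of_mem hw, Finset.sum_const, smul_eq_mul,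
    Finset.sdiff_singleton_eq_erase, Finset.card_erase_of_mem hw]
  gcongr
  omega

namespace RecolorableWithin

lemma insert_saver (h : RecolorableWithin G L A α β (budget k w)) (hk : 10 ≤ k) (hw : w ∉ A)
    (hα : IsLColoringOn G L (insert w A) α) (hβ : IsLColoringOn G L (insert w A) β)
    (hG : (G.neighborSet w ∩ A).encard ≤ 4) (hL : 10 ≤ (L w).card) :
    RecolorableWithin G L (insert w A) α β (budget k w) := by
  obtain ⟨N, hNcard, hN⟩ := exists_finset_neighbors_of_encard_le (d := 4) hG
  refine h.insert_vertex (f := 5) hw hα hβ hN (by omega) ?_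
  have hsum := sum_budget_le (w := w) hk hNcard
  rw [budget_self]
  omega

-- Six is the least number of early recolorings that brings `y` down to `k`; what they cost `x` is
-- covered by the savings of `w` as soon as `291 ≤ k`.
lemma insert_pair_of_saver_adj_left (h : RecolorableWithin G L A α β (budget k w)) (hk : 291 ≤ k)
    (hx : x ∉ A) (hy : y ∉ A) (hxy : G.Adj x y) (hw : w ∈ A) (hxw : G.Adj x w)
    (hα : IsLColoringOn G L (insert x (insert y A)) α)
    (hβ : IsLColoringOn G L (insert x (insert y A)) β)
    (hGx : (G.neighborSet x ∩ A).encard ≤ 4) (hGy : (G.neighborSet y ∩ A).encard ≤ 4)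
    (hLx : 10 ≤ (L x).card) (hLy : 10 ≤ (L y).card) :
    RecolorableWithin G L (insert x (insert y A)) α β (budget k w) := by
  obtain ⟨N, hNcard, hN⟩ := exists_finset_neighbors_of_encard_le (d := 4) hGx
  obtain ⟨M, hMcard, hM⟩ := exists_finset_neighbors_of_encard_le (d := 4) hGy
  have hsumN := sum_budget_le_of_mem (k := k) (hN w hw hxw) hNcard
  have hsumM := sum_budget_le (k := k) (w := w) (by omega) hMcard
  have hkx : budget k w x = k := budget_of_ne (ne_of_mem_of_not_mem hw hx).symm
  have hky : budget k w y = k := budget_of_ne (ne_of_mem_of_not_mem hw hy).symm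
  exact h.insert_pair (f := 4) (g := 4) hx hy hxy hα hβ hN hM (by norm_num) (by norm_num)
    (by omega) (by omega) 6 (by omega) (by omega) (by omega)

lemma insert_pair_of_saver_adj_both (h : RecolorableWithin G L A α β (budget k w)) (hk : 75 ≤ k)
    (hx : x ∉ A) (hy : y ∉ A) (hxy : G.Adj x y) (hw : w ∈ A) (hxw : G.Adj x w) (hyw : G.Adj y w)
    (hα : IsLColoringOn G L (insert x (insert y A)) α)
    (hβ : IsLColoringOn G L (insert x (insert y A)) β)
    (hGx : (G.neighborSet x ∩ A).encard ≤ 4) (hGy : (G.neighborSet y ∩ A).encard ≤ 4)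
    (hLx : 10 ≤ (L x).card) (hLy : 10 ≤ (L y).card) :
    RecolorableWithin G L (insert x (insert y A)) α β (budget k w) := by
  obtain ⟨N, hNcard, hN⟩ := exists_finset_neighbors_of_encard_le (d := 4) hGx
  obtain ⟨M, hMcard, hM⟩ := exists_finset_neighbors_of_encard_le (d := 4) hGy
  have hsumN := sum_budget_le_of_mem (k := k) (hN w hw hxw) hNcard
  have hsumM := sum_budget_le_of_mem (k := k) (hM w hw hyw) hMcard
  have hkx : budget k w x = k := budget_of_ne (ne_of_mem_of_not_mem hw hx).symm
  have hky : budget k w y = k := budget_of_ne (ne_of_mem_of_not_mem hw hy).symm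
  exact h.insert_pair (f := 4) (g := 4) hx hy hxy hα hβ hN hM (by norm_num) (by norm_num)
    (by omega) (by omega) 0 (by omega) (by omega) (by omega)

end RecolorableWithin

end Budget

theorem stmt_14_general {V : Type} (G : SimpleGraph V) [G.LocallyFinite] (k : ℕ) (hk : 291 ≤ k)
    (L : V → Finset ℕ) (α β : V → ℕ) (hα : IsLColoring G L α) (hβ : IsLColoring G L β)
    (v1 v2 w1 w2 w3 : V) (hnodup : ([v1, v2, w1, w2, w3] : List V).Nodup)
    (he1 : G.Adj v1 v2) (he2 : G.Adj v1 w1) (he3 : G.Adj v2 w1) (he4 : G.Adj v2 w2)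
    (he5 : G.Adj v2 w3) (he6 : G.Adj w1 w2) (he7 : G.Adj w2 w3)
    (hdv1 : G.degree v1 ≤ 5) (hdv2 : G.degree v2 ≤ 5) (hdw1 : G.degree w1 ≤ 7)
    (hdw2 : G.degree w2 ≤ 6) (hdw3 : G.degree w3 ≤ 6)
    (S : Set V) (hS : S = {v1, v2, w1, w2, w3}) (hL : ∀ u ∈ S, 10 ≤ (L u).card)
    (hrec : ∃ (m : ℕ) (φ : Fin (m + 1) → ↥(Sᶜ) → ℕ),
      IsRecolSeq (G.induce Sᶜ) (fun u => L u.1) φ (fun u => α u.1) (fun u => β u.1) ∧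
      ∀ u : ↥(Sᶜ), recolorCount φ u ≤ k) :
    ∃ (M : ℕ) (ψ : Fin (M + 1) → V → ℕ),
      IsRecolSeq G L ψ α β ∧ ∀ u : V, recolorCount ψ u ≤ k := by
  classical
  simp only [List.nodup_cons, List.mem_cons, List.not_mem_nil, not_or, or_false,
    List.nodup_nil, and_true, not_false_eq_true] at hnodup
  have hw31 : w3 ≠ w1 := Ne.symm hnodup.2.2.1.2
  obtain ⟨m, φ, hφ, hφk⟩ := hrec
  have hα' := hα.isLColoringOn
  have hβ' := hβ.isLColoringOn
  have h0 : RecolorableWithin G L Sᶜ α β (budget k w1) :=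
    hφ.recolorableWithin fun ⟨u, hu⟩ => (hφk _).trans_eq
      (budget_of_ne (by rintro rfl; simp [hS] at hu)).symm
  have h1 : RecolorableWithin G L (insert w1 Sᶜ) α β (budget k w1) :=
    h0.insert_saver (by omega) (by simp [hS]) (hα' _) (hβ' _)
      (encard_neighborSet_inter_le {v1, v2, w2} (by simp [he2.symm, he3.symm, he6])
        (by simp [hS]) (by simpa [hnodup] using hdw1))
      (hL w1 (by simp [hS]))
  have h2 : RecolorableWithin G L (insert w2 (insert w3 (insert w1 Sᶜ))) α β (budget k w1) :=
    h1.insert_pair_of_saver_adj_left hk (by simp [hS, he6.ne']) (by simp [hS, hw31])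
      he7 (by simp) he6.symm (hα' _) (hβ' _)
      (encard_neighborSet_inter_le {v2, w3} (by simp [he4.symm, he7])
        (by simp [hS, hnodup, hw31]) (by simpa [hnodup] using hdw2))
      (encard_neighborSet_inter_le {v2, w2} (by simp [he5.symm, he7.symm])
        (by simp [hS, hnodup, he6.ne']) (by simpa [hnodup] using hdw3))
      (hL w2 (by simp [hS])) (hL w3 (by simp [hS]))
  have h3 : RecolorableWithin G L (insert v1 (insert v2 (insert w2 (insert w3 (insert w1 Sᶜ)))))
      α β (budget k w1) :=
    h2.insert_pair_of_saver_adj_both (by omega) (by simp [hS, hnodup]) (by simp [hS, hnodup])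
      he1 (by simp) he2 he3 (hα' _) (hβ' _)
      (encard_neighborSet_inter_le {v2} (by simp [he1]) (by simp [hS, hnodup])
        (by simpa using hdv1))
      (encard_neighborSet_inter_le {v1} (by simp [he1.symm]) (by simp [hS, hnodup])
        (by simpa using hdv2))
      (hL v1 (by simp [hS])) (hL v2 (by simp [hS]))
  have huniv : insert v1 (insert v2 (insert w2 (insert w3 (insert w1 Sᶜ)))) = Set.univ := by
    ext u
    simp only [hS, Set.mem_insert_iff, Set.mem_compl_iff, Set.mem_singleton_iff, not_or,
      Set.mem_univ, iff_true]
    tauto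
  rw [huniv] at h3
  obtain ⟨M, ψ, hψ, hψk⟩ := h3.exists_isRecolSeq
  exact ⟨M, ψ, hψ, fun u => (hψk u).trans (budget_le (by omega))⟩

/-- configuration RC of Fig. more-reduc (d): if `G` contains this configuration and `G − S` has a
`k`-good recoloring sequence between the restrictions of `α` and `β` (`k ≥ 416`),
then `G` has a `k`-good recoloring sequence from `α` to `β`. -/
theorem stmt_14 {V : Type} [Fintype V] [DecidableEq V]
    (G : SimpleGraph V) [DecidableRel G.Adj]
    (k : ℕ) (hk : 416 ≤ k)
    (L : V → Finset ℕ) (hL : ∀ u, (L u).card = 10)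
    (α β : V → ℕ) (hα : IsLColoring G L α) (hβ : IsLColoring G L β)
    (v1 v2 w1 w2 w3 : V) (hnodup : ([v1, v2, w1, w2, w3] : List V).Nodup)
    (he1: G.Adj v1 v2)
    (he2: G.Adj v1 w1)
    (he3: G.Adj v2 w1)
    (he4: G.Adj v2 w2)
    (he5: G.Adj v2 w3)
    (he6: G.Adj w1 w2)
    (he7: G.Adj w2 w3)
    (hdv1 : G.degree v1 = 5)
    (hdv2 : G.degree v2 = 5)
    (hdw1 : G.degree w1 = 7)
    (hdw2 : G.degree w2 = 6)
    (hdw3 : G.degree w3 = 6)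
    (S : Set V) (hS : S = {v1, v2, w1, w2, w3})
    (hrec : ∃ (m : ℕ) (φ : Fin (m + 1) → ↥(Sᶜ) → ℕ),
      IsRecolSeq (G.induce Sᶜ) (fun u => L u.1) φ (fun u => α u.1) (fun u => β u.1) ∧
      ∀ u : ↥(Sᶜ), recolorCount φ u ≤ k) :
    ∃ (M : ℕ) (ψ : Fin (M + 1) → V → ℕ),
      IsRecolSeq G L ψ α β ∧ ∀ u : V, recolorCount ψ u ≤ k := by
  let : G.LocallyFinite := fun _ => inferInstance
  exact stmt_14_general G k (by omega) L α β hα hβ v1 v2 w1 w2 w3 hnodup he1 he2 he3 he4 he5 he6 he7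
    hdv1.le hdv2.le hdw1.le hdw2.le hdw3.le S hS (fun u _ => (hL u).ge) hrec
end

section
/- Fix an integer k ≥ 416. Let G be a finite simple graph, L a 10-assignment for G, and α, β two L-colorings of G. Suppose G contains seven distinct vertices v1, v2, w1, w2, w3, w4, x with edges v1v2, v1w1, v1w2, v1w4, v2w2, v2w3, v2w4, v2x, w1w2, w2x, w3x, w3w4, with d_G(v1) = d_G(v2) = 5, d_G(w1) = d_G(w3) = 6, and d_G(w2) = d_G(w4) = d_G(x) = 7. Let S = {v1, v2, w1, w2, w3, w4, x}. If there exists a k-good recoloring sequence in G − S from the restriction of α to G − S to the restriction of β to G − S, then there exists a k-good recoloring sequence in G from α to β. -/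
/-!
Put the vertices of `S` back in the order `x`, then `{w1, w2}`, `{w4, w3}`, `{v1, v2}`. Each of them
has at most four neighbors among the vertices already present (a pair being put back at once), so a
vertex of a pair that has to move can choose, among its ten colors, one that also avoids the next
four colors given to its neighbors; a vertex put back alone can look five such targets ahead. The
neighbors of `x` move at most `4 * k` times in total, so `x` moves only about `4 * k / 5` times.
Every pair has one member adjacent to `x`, and the slack that `x` leaves pays for the extra moves of
this member. For the other member, which may see `4 * k` targets and still has to reach its color
under `β`, we gain by putting it back alone, with five targets of look-ahead, on an initial stretch
of the sequence; its partner absorbs the additional moves.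
-/

namespace ListRecoloring

open Finset

variable {V C : Type*}

section Sequences

variable [DecidableEq V]

/-- The coloring reached from `φ` by performing the moves of `σ` from left to right, where the
move `(v, c)` gives the vertex `v` the color `c`. -/
def run (φ : V → C) (σ : List (V × C)) : V → C :=
  σ.foldl (fun ψ m => Function.update ψ m.1 m.2) φ

/-- The number of moves of `σ` that recolor the vertex `v`. -/
def moveCount (v : V) (σ : List (V × C)) : ℕ :=
  σ.countP (·.1 = v)

@[simp]
theorem run_nil (φ : V → C) : run φ [] = φ := rfl

@[simp]
theorem run_cons (φ : V → C) (m : V × C) (σ : List (V × C)) :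
    run φ (m :: σ) = run (Function.update φ m.1 m.2) σ := rfl

theorem run_append (φ : V → C) (σ τ : List (V × C)) : run φ (σ ++ τ) = run (run φ σ) τ :=
  List.foldl_append

@[simp]
theorem moveCount_nil (v : V) : moveCount v ([] : List (V × C)) = 0 := rfl

theorem moveCount_cons (v : V) (m : V × C) (σ : List (V × C)) :
    moveCount v (m :: σ) = moveCount v σ + if m.1 = v then 1 else 0 := by
  simp [moveCount, List.countP_cons]

theorem moveCount_append (v : V) (σ τ : List (V × C)) :
    moveCount v (σ ++ τ) = moveCount v σ + moveCount v τ :=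
  List.countP_append

theorem run_apply_congr {φ ψ : V → C} {v : V} (h : φ v = ψ v) (σ : List (V × C)) :
    run φ σ v = run ψ σ v := by
  induction σ generalizing φ ψ with
  | nil => exact h
  | cons m _ ih => exact ih (by simp only [Function.update_apply, h])

theorem run_filter_notMem_apply (A : Set V) [DecidablePred (· ∈ A)] {v : V} (hv : v ∉ A)
    (φ : V → C) (σ : List (V × C)) : run φ (σ.filter (·.1 ∉ A)) v = run φ σ v := by
  induction σ generalizing φ with
  | nil => rfl
  | cons m σ ih =>
    by_cases hm : m.1 ∈ A
    · have hvm : v ≠ m.1 := fun h => hv (h ▸ hm)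
      rw [List.filter_cons_of_neg (by simpa using hm), ih, run_cons]
      exact run_apply_congr (by simp [hvm]) σ
    · rw [List.filter_cons_of_pos (by simpa using hm), run_cons, ih, run_cons]

theorem moveCount_filter_notMem (A : Set V) [DecidablePred (· ∈ A)] {v : V} (hv : v ∉ A)
    (σ : List (V × C)) : moveCount v (σ.filter (·.1 ∉ A)) = moveCount v σ := by
  rw [moveCount, List.countP_filter]
  refine List.countP_congr fun m _ => ?_
  simp only [Bool.and_eq_true, decide_eq_true_eq, and_iff_left_iff_imp]
  exact fun h => h ▸ hv

end Sequences

section Targets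

variable (G : SimpleGraph V) [DecidableRel G.Adj]

/-- The colors given by the moves of `σ` to the neighbors of `a`, in order. A sequence that does
not move `a` stays proper at `a` as long as the color of `a` does not occur in this list. -/
def targets (a : V) (σ : List (V × C)) : List C :=
  (σ.filter (G.Adj a ·.1)).map Prod.snd

variable {G} {a b : V}

@[simp]
theorem targets_nil : targets G a ([] : List (V × C)) = [] := rfl

@[simp]
theorem targets_cons_of_adj {m : V × C} (h : G.Adj a m.1) (σ : List (V × C)) :
    targets G a (m :: σ) = m.2 :: targets G a σ := by
  simp [targets, h]

@[simp]
theorem targets_cons_of_not_adj {m : V × C} (h : ¬G.Adj a m.1) (σ : List (V × C)) :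
    targets G a (m :: σ) = targets G a σ := by
  simp [targets, h]

theorem targets_append (σ τ : List (V × C)) :
    targets G a (σ ++ τ) = targets G a σ ++ targets G a τ := by
  simp [targets]

theorem exists_eq_append_length_targets_le (a : V) (σ : List (V × C)) (n : ℕ) :
    ∃ σ₁ σ₂, σ = σ₁ ++ σ₂ ∧ (targets G a σ₁).length ≤ n ∧
      (targets G a σ₂).length ≤ (targets G a σ).length - n := by
  induction σ generalizing n with
  | nil => exact ⟨[], [], rfl, by simp, by simp⟩
  | cons m σ ih =>
    by_cases hm : G.Adj a m.1
    · cases n with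
      | zero => exact ⟨[], m :: σ, rfl, by simp, by simp⟩
      | succ n =>
        obtain ⟨σ₁, σ₂, rfl, h₁, h₂⟩ := ih n
        exact ⟨m :: σ₁, σ₂, rfl, by simpa [hm] using h₁, by simpa [hm] using h₂⟩
    · obtain ⟨σ₁, σ₂, rfl, h₁, h₂⟩ := ih n
      exact ⟨m :: σ₁, σ₂, rfl, by simpa [hm] using h₁, by simpa [hm] using h₂⟩

theorem length_targets_eq_add_moveCount [DecidableEq V] (hba : G.Adj b a) (σ : List (V × C)) :
    (targets G b σ).length =
      (targets G b (σ.filter (·.1 ∉ ({a} : Set V)))).length + moveCount a σ := by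
  induction σ with
  | nil => rfl
  | cons m σ ih =>
    rw [moveCount_cons]
    by_cases hma : m.1 = a
    · rw [List.filter_cons_of_neg (by simpa using hma), targets_cons_of_adj (hma ▸ hba),
        List.length_cons, ih, if_pos hma, add_assoc]
    · by_cases hbm : G.Adj b m.1 <;> simp [hma, hbm, ih]
      omega

end Targets

section NeighborsIn

variable (G : SimpleGraph V) [G.LocallyFinite]

open Classical in
/-- The neighbors of `a` that lie in `U`. -/
noncomputable def neighborsIn (a : V) (U : Set V) : Finset V :=
  {u ∈ G.neighborFinset a | u ∈ U}

variable {G} {a b u : V} {U : Set V}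

@[simp]
theorem mem_neighborsIn : u ∈ neighborsIn G a U ↔ G.Adj a u ∧ u ∈ U := by
  simp [neighborsIn]

theorem neighborsIn_insert_self : neighborsIn G a (insert a U) = neighborsIn G a U := by
  ext u
  simp only [mem_neighborsIn, Set.mem_insert_iff, and_congr_right_iff, or_iff_right_iff_imp]
  rintro hau rfl
  exact absurd hau G.irrefl

theorem card_neighborsIn_insert_le :
    #(neighborsIn G a (insert b U)) ≤ #(neighborsIn G a U) + 1 := by
  classical
  refine (card_le_card fun u hu => ?_).trans (card_insert_le b _)
  simp only [mem_neighborsIn, Set.mem_insert_iff, mem_insert] at hu ⊢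
  tauto

theorem card_neighborsIn_compl_le {d : ℕ} (T : Finset V) (hT : ∀ v ∈ T, G.Adj a v ∧ v ∈ U)
    (hdeg : G.degree a ≤ #T + d) : #(neighborsIn G a Uᶜ) ≤ d := by
  classical
  have hdisj : Disjoint (neighborsIn G a Uᶜ) T :=
    disjoint_left.2 fun v hv hvT => (mem_neighborsIn.1 hv).2 (hT v hvT).2
  have hsub : neighborsIn G a Uᶜ ∪ T ⊆ G.neighborFinset a := by
    refine union_subset (fun v hv => ?_) fun v hv => ?_
    · simpa using (mem_neighborsIn.1 hv).1
    · simpa using (hT v hv).1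
  have hcard := card_le_card hsub
  rw [card_union_of_disjoint hdisj, G.card_neighborFinset_eq_degree] at hcard
  omega

theorem sum_neighborsIn_le {κ : V → ℕ} {d k : ℕ} (hκ : ∀ v, κ v ≤ k)
    (hd : #(neighborsIn G a U) ≤ d) : ∑ u ∈ neighborsIn G a U, κ u ≤ d * k :=
  (sum_le_card_nsmul _ _ k fun u _ => hκ u).trans (Nat.mul_le_mul_right k hd)

theorem sum_neighborsIn_le_of_adj {κ : V → ℕ} {d k : ℕ} (hκ : ∀ v, κ v ≤ k)
    (hd : #(neighborsIn G a U) ≤ d + 1) (hab : G.Adj a b) (hb : b ∈ U) :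
    ∑ u ∈ neighborsIn G a U, κ u ≤ d * k + κ b := by
  classical
  have hmem : b ∈ neighborsIn G a U := mem_neighborsIn.2 ⟨hab, hb⟩
  have hcard := card_erase_of_mem hmem
  rw [← sum_erase_add _ _ hmem]
  refine Nat.add_le_add_right ((sum_le_card_nsmul _ _ k fun u _ => hκ u).trans ?_) _
  exact Nat.mul_le_mul_right k (by omega)

theorem length_targets_eq_sum [DecidableEq V] [DecidableRel G.Adj] {σ : List (V × C)}
    (hσ : ∀ m ∈ σ, m.1 ∈ U) :
    (targets G a σ).length = ∑ u ∈ neighborsIn G a U, moveCount u σ := by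
  induction σ with
  | nil => simp
  | cons m σ ih =>
    rw [List.forall_mem_cons] at hσ
    simp only [moveCount_cons, sum_add_distrib, sum_ite_eq, mem_neighborsIn, ← ih hσ.2]
    by_cases ham : G.Adj a m.1 <;> simp [ham, hσ.1]

end NeighborsIn

section ListColorings

variable (G : SimpleGraph V) (L : V → Finset C)

/-- `φ` restricts to an `L`-coloring of the subgraph of `G` induced on `U`. -/
def IsListColoringOn (U : Set V) (φ : V → C) : Prop :=
  ∀ u ∈ U, φ u ∈ L u ∧ ∀ w ∈ U, G.Adj u w → φ u ≠ φ w

/-- In the subgraph of `G` induced on `U`, colored by `φ`, the vertex `v` may be given the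
color `c`. The case `c = φ v` is allowed, so a sequence of such moves may contain idle ones. -/
structure CanRecolor (U : Set V) (φ : V → C) (v : V) (c : C) : Prop where
  mem : v ∈ U
  mem_list : c ∈ L v
  ne_of_adj : ∀ u ∈ U, G.Adj v u → φ u ≠ c

variable {G L} {U W : Set V} {φ ψ : V → C} {v : V} {c : C}

theorem CanRecolor.congr (h : Set.EqOn φ ψ U) (hc : CanRecolor G L U φ v c) :
    CanRecolor G L U ψ v c :=
  ⟨hc.mem, hc.mem_list, fun u hu hvu => h hu ▸ hc.ne_of_adj u hu hvu⟩

theorem IsListColoringOn.canRecolor (hφ : IsListColoringOn G L U φ)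
    (hψ : ∀ u ∈ U, u ≠ v → ψ u = φ u) (hv : v ∈ U) : CanRecolor G L U ψ v (φ v) := by
  refine ⟨hv, (hφ v hv).1, fun u hu hvu => ?_⟩
  rw [hψ u hu hvu.ne']
  exact ((hφ v hv).2 u hu hvu).symm

theorem IsListColoringOn.mono (hφ : IsListColoringOn G L W φ) (hUW : U ⊆ W) :
    IsListColoringOn G L U φ :=
  fun u hu => ⟨(hφ u (hUW hu)).1, fun w hw => (hφ u (hUW hu)).2 w (hUW hw)⟩

theorem exists_canRecolor_notMem [G.LocallyFinite] (φ : V → C) (hv : v ∈ U) (l : List C)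
    (hl : #(neighborsIn G v U) + l.length < #(L v)) :
    ∃ c, CanRecolor G L U φ v c ∧ c ∉ l := by
  classical
  obtain ⟨c, hcL, hc⟩ : ∃ c ∈ L v, c ∉ (neighborsIn G v U).image φ ∪ l.toFinset :=
    exists_mem_notMem_of_card_lt_card <| (card_union_le _ _).trans_lt <|
      (Nat.add_le_add card_image_le l.toFinset_card_le).trans_lt hl
  simp only [mem_union, mem_image, mem_neighborsIn, List.mem_toFinset, not_or, not_exists,
    not_and] at hc
  exact ⟨c, ⟨hv, hcL, fun u hu hvu => hc.1 u ⟨hvu, hu⟩⟩, hc.2⟩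

variable [DecidableEq V]

theorem IsListColoringOn.update (hφ : IsListColoringOn G L U φ) (hc : CanRecolor G L U φ v c) :
    IsListColoringOn G L U (Function.update φ v c) := by
  intro u hu
  obtain rfl | huv := eq_or_ne u v
  · refine ⟨by simpa using hc.mem_list, fun w hw huw => ?_⟩
    simpa [huw.ne'] using (hc.ne_of_adj w hw huw).symm
  · refine ⟨by simpa [huv] using (hφ u hu).1, fun w hw huw => ?_⟩
    obtain rfl | hwv := eq_or_ne w v
    · simpa [huv] using hc.ne_of_adj u hu huw.symm
    · simpa [huv, hwv] using (hφ u hu).2 w hw huw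

variable (G L) in
/-- Starting from `φ`, all moves of `σ` are possible in the subgraph of `G` induced on `U`. -/
def IsLegal (U : Set V) : (V → C) → List (V × C) → Prop
  | _, [] => True
  | φ, m :: σ => CanRecolor G L U φ m.1 m.2 ∧ IsLegal U (Function.update φ m.1 m.2) σ

theorem isLegal_append {σ τ : List (V × C)} :
    IsLegal G L U φ (σ ++ τ) ↔ IsLegal G L U φ σ ∧ IsLegal G L U (run φ σ) τ := by
  induction σ generalizing φ with
  | nil => simp [IsLegal]
  | cons m σ ih => simp only [List.cons_append, IsLegal, run_cons, ih, and_assoc]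

theorem IsLegal.congr {σ : List (V × C)} (h : Set.EqOn φ ψ U) (hσ : IsLegal G L U φ σ) :
    IsLegal G L U ψ σ := by
  induction σ generalizing φ ψ with
  | nil => trivial
  | cons m σ ih =>
    refine ⟨hσ.1.congr h, ih (fun u hu => ?_) hσ.2⟩
    simp only [Function.update_apply, h hu]

theorem IsLegal.fst_mem {σ : List (V × C)} (hσ : IsLegal G L U φ σ) : ∀ m ∈ σ, m.1 ∈ U := by
  induction σ generalizing φ with
  | nil => simp
  | cons m σ ih => exact List.forall_mem_cons.2 ⟨hσ.1.mem, ih hσ.2⟩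

theorem IsListColoringOn.run {σ : List (V × C)} (hφ : IsListColoringOn G L U φ)
    (hσ : IsLegal G L U φ σ) : IsListColoringOn G L U (run φ σ) := by
  induction σ generalizing φ with
  | nil => exact hφ
  | cons m σ ih => exact ih (hφ.update hσ.1) hσ.2

end ListColorings

section Lifts

variable (G : SimpleGraph V) [DecidableRel G.Adj]

/-- The color of every vertex `a ∈ A` avoids the next `j a` colors that `σ` gives to neighbors
of `a`. -/
def AvoidsAhead (A : Set V) (j : V → ℕ) (φ : V → C) (σ : List (V × C)) : Prop :=
  ∀ a ∈ A, φ a ∉ (targets G a σ).take (j a)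

variable {G} {U A : Set V} {p : ℕ} {φ : V → C} {j : V → ℕ} {σ σ' : List (V × C)} {m : V × C}
  {a : V} {c : C}

theorem AvoidsAhead.eq_zero (h : AvoidsAhead G A j φ (m :: σ)) (ha : a ∈ A) (ham : G.Adj a m.1)
    (hφa : φ a = m.2) : j a = 0 := by
  by_contra hne
  obtain ⟨n, hn⟩ := Nat.exists_eq_succ_of_ne_zero hne
  exact h a ha (by simp [ham, hn, hφa])

variable [DecidableEq V]

theorem AvoidsAhead.tail (hmA : m.1 ∉ A) (h : AvoidsAhead G A j φ (m :: σ)) :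
    AvoidsAhead G A (fun a => if G.Adj a m.1 then j a - 1 else j a)
      (Function.update φ m.1 m.2) σ := by
  intro a ha
  have hja := h a ha
  have ham : a ≠ m.1 := fun e => hmA (e ▸ ha)
  rw [Function.update_of_ne ham]
  by_cases hadj : G.Adj a m.1
  · cases hj : j a <;> simp_all
  · simpa [hadj] using hja

theorem AvoidsAhead.update (h : AvoidsAhead G A j φ σ) (hc : c ∉ (targets G a σ).take p) :
    AvoidsAhead G A (Function.update j a p) (Function.update φ a c) σ := by
  intro b hb
  obtain rfl | hba := eq_or_ne b a
  · simpa using hc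
  · simpa [hba] using h b hb

variable (G) in
/-- `σ'` lifts the sequence `σ` of moves in `U` to a sequence in `U ∪ A` that starts from `φ` and
moves the vertices of `A` rarely: a vertex `a ∈ A` is not charged for the first `j a` targets of
`σ`, and moves at most once for every `p` targets after these, rounded up. -/
structure IsLift (L : V → Finset C) (U A : Set V) [DecidablePred (· ∈ A)] (p : ℕ) (j : V → ℕ)
    (φ : V → C) (σ σ' : List (V × C)) : Prop where
  isLegal : IsLegal G L (U ∪ A) φ σ'
  filter_eq : σ'.filter (·.1 ∉ A) = σ
  mul_moveCount_le : ∀ a ∈ A, p * moveCount a σ' ≤ (targets G a σ).length - j a + (p - 1)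

variable {L : V → Finset C} [DecidablePred (· ∈ A)]

theorem IsLift.cons_move (hm : CanRecolor G L (U ∪ A) φ m.1 m.2) (hmA : m.1 ∉ A)
    (h : IsLift G L U A p (fun a => if G.Adj a m.1 then j a - 1 else j a)
      (Function.update φ m.1 m.2) σ σ') :
    IsLift G L U A p j φ (m :: σ) (m :: σ') := by
  refine ⟨⟨hm, h.isLegal⟩, ?_, fun a ha => ?_⟩
  · rw [List.filter_cons_of_pos (by simpa using hmA), h.filter_eq]
  have hma : m.1 ≠ a := fun e => hmA (e ▸ ha)
  have hcount := h.mul_moveCount_le a ha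
  rw [moveCount_cons, if_neg hma, add_zero]
  by_cases ham : G.Adj a m.1
  · simp only [ham, if_true, targets_cons_of_adj, List.length_cons] at hcount ⊢
    omega
  · simpa [ham] using hcount

theorem IsLift.cons_recolor (ha : a ∈ A) (hc : CanRecolor G L (U ∪ A) φ a c)
    (hja : j a = 0) (hσ : 0 < (targets G a σ).length)
    (h : IsLift G L U A p (Function.update j a p) (Function.update φ a c) σ σ') :
    IsLift G L U A p j φ σ ((a, c) :: σ') := by
  refine ⟨⟨hc, h.isLegal⟩, by simpa [ha] using h.filter_eq, fun b hb => ?_⟩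
  have hcount := h.mul_moveCount_le b hb
  obtain rfl | hba := eq_or_ne b a
  · rw [Function.update_self] at hcount
    rw [moveCount_cons, if_pos rfl, mul_add, mul_one, hja]
    obtain hlt | hle := lt_or_ge (targets G b σ).length p
    · have hzero : moveCount b σ' = 0 := by
        by_contra hne
        have := Nat.le_mul_of_pos_right p (Nat.pos_of_ne_zero hne)
        omega
      rw [hzero]
      omega
    · omega
  · simpa [moveCount_cons, hba, hba.symm] using hcount

/- Move `a ∈ A` only when `σ` is about to give a neighbor the current color of `a`, and then choose
a color that also avoids the next `p` targets. As `A` is a clique, only one vertex of `A` can be in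
the way of a move. -/
theorem exists_isLift [G.LocallyFinite] (hUA : Disjoint U A) (hA : G.IsClique A) (hp : 0 < p)
    (hcard : ∀ a ∈ A, #(neighborsIn G a (U ∪ A)) + p < #(L a))
    (hφ : IsListColoringOn G L (U ∪ A) φ) (hσ : IsLegal G L U φ σ)
    (hj : AvoidsAhead G A j φ σ) :
    ∃ σ', IsLift G L U A p j φ σ σ' := by
  induction σ generalizing φ j with
  | nil => exact ⟨[], trivial, rfl, by simp⟩
  | cons m σ ih =>
    have hmA : m.1 ∉ A := Set.disjoint_left.1 hUA hσ.1.mem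
    have exists_of_avoids {φ : V → C} {j : V → ℕ} (hφ : IsListColoringOn G L (U ∪ A) φ)
        (hσ : IsLegal G L U φ (m :: σ)) (hj : AvoidsAhead G A j φ (m :: σ))
        (havoid : ∀ a ∈ A, G.Adj a m.1 → φ a ≠ m.2) :
        ∃ σ', IsLift G L U A p j φ (m :: σ) σ' := by
      have hm : CanRecolor G L (U ∪ A) φ m.1 m.2 :=
        ⟨.inl hσ.1.mem, hσ.1.mem_list, fun u hu hmu =>
          hu.elim (hσ.1.ne_of_adj u · hmu) (havoid u · hmu.symm)⟩
      obtain ⟨σ', hσ'⟩ := ih (hφ.update hm) hσ.2 (hj.tail hmA)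
      exact ⟨m :: σ', hσ'.cons_move hm hmA⟩
    by_cases havoid : ∀ a ∈ A, G.Adj a m.1 → φ a ≠ m.2
    · exact exists_of_avoids hφ hσ hj havoid
    push Not at havoid
    obtain ⟨a, ha, ham, hφa⟩ := havoid
    obtain ⟨c, hc, hcσ⟩ := exists_canRecolor_notMem φ (.inr ha : a ∈ U ∪ A)
      ((targets G a (m :: σ)).take p)
      ((Nat.add_le_add_left (List.length_take_le _ _) _).trans_lt (hcard a ha))
    have hcm : m.2 ≠ c := by
      obtain ⟨n, rfl⟩ := Nat.exists_eq_succ_of_ne_zero hp.ne'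
      simp_all [eq_comm]
    have hEqOn : Set.EqOn φ (Function.update φ a c) U := fun u hu =>
      (Function.update_of_ne (hUA.ne_of_mem hu ha) _ _).symm
    obtain ⟨σ', hσ'⟩ := exists_of_avoids (hφ.update hc) (hσ.congr hEqOn) (hj.update hcσ) <| by
      intro b hb _
      obtain rfl | hba := eq_or_ne b a
      · simpa using hcm.symm
      · simpa [hba, hφa] using (hφ b (.inr hb)).2 a (.inr ha) (hA hb ha hba)
    exact ⟨(a, c) :: σ', hσ'.cons_recolor ha hc (hj.eq_zero ha ham hφa) (by simp [ham])⟩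

end Lifts

section LiftsToPairs

variable [DecidableEq V] {G : SimpleGraph V} [DecidableRel G.Adj] [G.LocallyFinite]
  {L : V → Finset C} {U : Set V} {p : ℕ} {φ : V → C} {σ : List (V × C)} {a b : V}

theorem exists_lift_insert (hp : 0 < p) (ha : a ∉ U) (hcard : #(neighborsIn G a U) + p < #(L a))
    (hφ : IsListColoringOn G L (insert a U) φ) (hσ : IsLegal G L U φ σ) :
    ∃ σ', IsLegal G L (insert a U) φ σ' ∧ σ'.filter (·.1 ∉ ({a} : Set V)) = σ ∧
      p * moveCount a σ' ≤ (targets G a σ).length + (p - 1) := by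
  rw [← Set.union_singleton] at hφ ⊢
  obtain ⟨σ', hσ'⟩ := exists_isLift (A := {a}) (j := 0) (Set.disjoint_singleton_right.2 ha)
    (G.isClique_singleton a) hp
    (by simpa [neighborsIn_insert_self] using hcard) hφ hσ (by simp [AvoidsAhead])
  exact ⟨σ', hσ'.isLegal, hσ'.filter_eq, hσ'.mul_moveCount_le a rfl⟩

theorem exists_lift_pair (hp : 0 < p) (hab : G.Adj a b) (ha : a ∉ U) (hb : b ∉ U)
    (hda : #(neighborsIn G a U) + p + 1 < #(L a)) (hdb : #(neighborsIn G b U) + p + 1 < #(L b))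
    (hφ : IsListColoringOn G L (insert a (insert b U)) φ) (hσ : IsLegal G L U φ σ) :
    ∃ σ', IsLegal G L (insert a (insert b U)) φ σ' ∧
      σ'.filter (·.1 ∉ ({a, b} : Set V)) = σ ∧
      p * moveCount a σ' ≤ (targets G a σ).length + (p - 1) ∧
      p * moveCount b σ' ≤ (targets G b σ).length + (p - 1) := by
  have hunion : insert a (insert b U) = U ∪ {a, b} := by simp
  have hda' : #(neighborsIn G a (U ∪ {a, b})) ≤ #(neighborsIn G a U) + 1 := by
    rw [← hunion, neighborsIn_insert_self]
    exact card_neighborsIn_insert_le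
  have hdb' : #(neighborsIn G b (U ∪ {a, b})) ≤ #(neighborsIn G b U) + 1 := by
    rw [← hunion, Set.insert_comm, neighborsIn_insert_self]
    exact card_neighborsIn_insert_le
  rw [hunion] at hφ ⊢
  obtain ⟨σ', hσ'⟩ := exists_isLift (A := {a, b}) (j := 0) (by simp [ha, hb])
    (by simpa using fun _ => hab) hp (by rintro c (rfl | rfl) <;> omega) hφ hσ
    (by simp [AvoidsAhead])
  exact ⟨σ', hσ'.isLegal, hσ'.filter_eq, hσ'.mul_moveCount_le a (by simp),
    hσ'.mul_moveCount_le b (by simp)⟩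

/- Lifting to `a` first, while `b` is still absent, lets `a` look `p + 1` targets ahead. -/
theorem exists_lift_pair_successively (hp : 0 < p) (q : ℕ) (hab : G.Adj a b) (ha : a ∉ U)
    (hb : b ∉ U) (hda : #(neighborsIn G a U) + p + 1 < #(L a))
    (hdb : #(neighborsIn G b U) + p + 1 < #(L b))
    (hφ : IsListColoringOn G L (insert a (insert b U)) φ) (hσ : IsLegal G L U φ σ)
    (hq : (targets G a σ).length ≤ (p + 1) * q) :
    ∃ σ', IsLegal G L (insert a (insert b U)) φ σ' ∧
      σ'.filter (·.1 ∉ ({a, b} : Set V)) = σ ∧ moveCount a σ' ≤ q ∧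
      p * moveCount b σ' ≤ (targets G b σ).length + q + (p - 1) := by
  obtain ⟨τ, hτ, hτσ, haτ⟩ := exists_lift_insert (p := p + 1) (by omega) ha (by omega)
    (hφ.mono (Set.insert_subset_insert (Set.subset_insert b U))) hσ
  have hbU : b ∉ insert a U := by simp [hb, hab.ne']
  have hdb' := (card_neighborsIn_insert_le (G := G) (a := b) (b := a) (U := U))
  rw [Set.insert_comm] at hφ ⊢
  obtain ⟨ρ, hρ, hρτ, hbρ⟩ := exists_lift_insert hp hbU (by omega) hφ hτ
  have haρ : moveCount a ρ = moveCount a τ := by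
    rw [← hρτ, moveCount_filter_notMem ({b} : Set V) hab.ne]
  have htargets := length_targets_eq_add_moveCount hab.symm τ
  have haq : moveCount a τ ≤ q := by
    have : (p + 1) * moveCount a τ < (p + 1) * (q + 1) := by rw [mul_add _ q]; omega
    exact Order.lt_add_one_iff.1 (Nat.lt_of_mul_lt_mul_left this)
  rw [hτσ] at htargets
  refine ⟨ρ, hρ, ?_, by omega, by omega⟩
  rw [← hτσ, ← hρτ, List.filter_filter]
  exact List.filter_congr fun m _ => by simp

/- Lifting only the first `(p + 1) * q` targets of `a` successively saves `a` enough moves to pay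
for its last move to a prescribed color. -/
theorem exists_lift_pair_saving (hp : 0 < p) (q : ℕ) (hab : G.Adj a b) (ha : a ∉ U) (hb : b ∉ U)
    (hda : #(neighborsIn G a U) + p + 1 < #(L a)) (hdb : #(neighborsIn G b U) + p + 1 < #(L b))
    (hφ : IsListColoringOn G L (insert a (insert b U)) φ) (hσ : IsLegal G L U φ σ) :
    ∃ σ', IsLegal G L (insert a (insert b U)) φ σ' ∧
      σ'.filter (·.1 ∉ ({a, b} : Set V)) = σ ∧
      p * moveCount a σ' ≤ p * q + ((targets G a σ).length - (p + 1) * q) + (p - 1) ∧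
      p * moveCount b σ' ≤ (targets G b σ).length + q + 2 * (p - 1) := by
  obtain ⟨σ₁, σ₂, rfl, hlen₁, hlen₂⟩ :=
    exists_eq_append_length_targets_le (G := G) a σ ((p + 1) * q)
  rw [isLegal_append] at hσ
  obtain ⟨ρ, hρ, hρσ, haρ, hbρ⟩ :=
    exists_lift_pair_successively hp q hab ha hb hda hdb hφ hσ.1 hlen₁
  have hEqOn : Set.EqOn (run φ σ₁) (run φ ρ) U := fun u hu => by
    rw [← hρσ, run_filter_notMem_apply]
    rintro (rfl | rfl) <;> contradiction
  obtain ⟨μ, hμ, hμσ, haμ, hbμ⟩ :=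
    exists_lift_pair hp hab ha hb hda hdb (hφ.run hρ) (hσ.2.congr hEqOn)
  refine ⟨ρ ++ μ, isLegal_append.2 ⟨hρ, hμ⟩, by rw [List.filter_append, hρσ, hμσ], ?_, ?_⟩
  · have := Nat.mul_le_mul_left p haρ
    rw [moveCount_append, mul_add]
    omega
  · rw [moveCount_append, mul_add, targets_append, List.length_append]
    omega

end LiftsToPairs

section Budgets

variable [DecidableEq V] (G : SimpleGraph V) (L : V → Finset C)

/-- The subgraph of `G` induced on `U` has a sequence of moves from `α` to `β` that recolors every
vertex `v` of `U` at most `κ v` times. -/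
def HasRecoloring (α β : V → C) (κ : V → ℕ) (U : Set V) : Prop :=
  ∃ σ, IsLegal G L U α σ ∧ Set.EqOn (run α σ) β U ∧ ∀ v ∈ U, moveCount v σ ≤ κ v

variable {G L} {α β φ : V → C} {κ κ' : V → ℕ} {U : Set V} {a b : V}

theorem HasRecoloring.mono (hκ : ∀ v ∈ U, κ v ≤ κ' v) (h : HasRecoloring G L α β κ U) :
    HasRecoloring G L α β κ' U := by
  obtain ⟨σ, hσ, hσβ, hcount⟩ := h
  exact ⟨σ, hσ, hσβ, fun v hv => (hcount v hv).trans (hκ v hv)⟩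

variable [G.LocallyFinite]

/- Move `b` out of the way of `a`, then `a` to its final color, then `b`. -/
theorem exists_finish_pair (hab : a ≠ b)
    (hdb : #(neighborsIn G b U) + 2 < #(L b))
    (hβ : IsListColoringOn G L (insert a (insert b U)) β) (hφ : Set.EqOn φ β U) :
    ∃ τ, IsLegal G L (insert a (insert b U)) φ τ ∧
      Set.EqOn (run φ τ) β (insert a (insert b U)) ∧
      moveCount a τ = 1 ∧ moveCount b τ = 2 ∧ ∀ v, v ≠ a → v ≠ b → moveCount v τ = 0 := by
  have hdb' : #(neighborsIn G b (insert a (insert b U))) ≤ #(neighborsIn G b U) + 1 := by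
    rw [Set.insert_comm, neighborsIn_insert_self]
    exact card_neighborsIn_insert_le
  obtain ⟨c, hc, hcβ⟩ := exists_canRecolor_notMem (G := G) (L := L) φ
    (by simp : b ∈ insert a (insert b U)) [β a] (by simpa using by omega)
  rw [List.mem_singleton] at hcβ
  have ha : CanRecolor G L (insert a (insert b U)) (Function.update φ b c) a (β a) := by
    refine ⟨by simp, (hβ a (by simp)).1, fun u hu hau => ?_⟩
    obtain rfl | hub := eq_or_ne u b
    · simpa using hcβ
    · have huU : u ∈ U := by simpa [hub, hau.ne'] using hu
      simpa [hub, hφ huU] using ((hβ a (by simp)).2 u hu hau).symm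
  have hb : CanRecolor G L (insert a (insert b U))
      (Function.update (Function.update φ b c) a (β a)) b (β b) := by
    refine hβ.canRecolor (fun u hu hub => ?_) (by simp)
    obtain rfl | hua := eq_or_ne u a
    · simp
    · have huU : u ∈ U := by simpa [hub, hua] using hu
      simp [hub, hua, hφ huU]
  refine ⟨[(b, c), (a, β a), (b, β b)], ⟨hc, ha, hb, trivial⟩, fun u hu => ?_, ?_, ?_, ?_⟩
  · obtain rfl | hub := eq_or_ne u b
    · simp
    obtain rfl | hua := eq_or_ne u a
    · simp [hub]
    · have huU : u ∈ U := by simpa [hub, hua] using hu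
      simp [hub, hua, hφ huU]
  · simp [moveCount_cons, hab.symm]
  · simp [moveCount_cons, hab]
  · intro v hva hvb
    simp [moveCount_cons, hva.symm, hvb.symm]

theorem length_targets_le_sum [DecidableRel G.Adj] {σ : List (V × C)} (hσ : IsLegal G L U α σ)
    (hcount : ∀ v ∈ U, moveCount v σ ≤ κ v) (a : V) :
    (targets G a σ).length ≤ ∑ u ∈ neighborsIn G a U, κ u := by
  rw [length_targets_eq_sum hσ.fst_mem]
  exact sum_le_sum fun u hu => hcount u (mem_neighborsIn.1 hu).2

theorem HasRecoloring.insert_vertex {p : ℕ} (hp : 0 < p) (ha : a ∉ U)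
    (hda : #(neighborsIn G a U) + p < #(L a))
    (hα : IsListColoringOn G L (insert a U) α) (hβ : IsListColoringOn G L (insert a U) β)
    (hκ : ∑ u ∈ neighborsIn G a U, κ u + p ≤ p * κ a) (h : HasRecoloring G L α β κ U) :
    HasRecoloring G L α β κ (insert a U) := by
  classical
  obtain ⟨σ, hσ, hσβ, hcount⟩ := h
  have hlen := length_targets_le_sum hσ hcount a
  obtain ⟨ρ, hρ, hρσ, haρ⟩ := exists_lift_insert hp ha hda hα hσ
  have hne {v : V} (hv : v ∈ U) : v ≠ a := fun e => ha (e ▸ hv)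
  have hρβ : Set.EqOn (run α ρ) β U := fun u hu => by
    rw [← hσβ hu, ← hρσ, run_filter_notMem_apply ({a} : Set V) (hne hu)]
  have hfinal : CanRecolor G L (insert a U) (run α ρ) a (β a) :=
    hβ.canRecolor (fun u hu hua => hρβ (hu.resolve_left hua)) (by simp)
  refine ⟨ρ ++ [(a, β a)], isLegal_append.2 ⟨hρ, hfinal, trivial⟩, ?_, ?_⟩
  · rintro u (rfl | hu)
    · simp [run_append]
    · simp [run_append, hne hu, hρβ hu]
  · rintro u (rfl | hu)
    · refine Order.lt_add_one_iff.1 (Nat.lt_of_mul_lt_mul_left (a := p) ?_)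
      simp only [moveCount_append, moveCount_cons, moveCount_nil, if_true, mul_add]
      omega
    · have huρ := moveCount_filter_notMem ({a} : Set V) (hne hu) ρ
      rw [hρσ] at huρ
      simpa [moveCount_append, moveCount_cons, (hne hu).symm, ← huρ] using hcount u hu

theorem HasRecoloring.insert_pair {p : ℕ} (hp : 0 < p) (q : ℕ) (hab : G.Adj a b) (ha : a ∉ U)
    (hb : b ∉ U) (hda : #(neighborsIn G a U) + p + 1 < #(L a))
    (hdb : #(neighborsIn G b U) + p + 1 < #(L b))
    (hα : IsListColoringOn G L (insert a (insert b U)) α)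
    (hβ : IsListColoringOn G L (insert a (insert b U)) β)
    (hκa : p * q + (∑ u ∈ neighborsIn G a U, κ u - (p + 1) * q) + p ≤ p * κ a)
    (hκb : ∑ u ∈ neighborsIn G b U, κ u + q + (3 * p - 1) ≤ p * κ b)
    (h : HasRecoloring G L α β κ U) :
    HasRecoloring G L α β κ (insert a (insert b U)) := by
  classical
  obtain ⟨σ, hσ, hσβ, hcount⟩ := h
  have hlen := length_targets_le_sum hσ hcount
  obtain ⟨ρ, hρ, hρσ, haρ, hbρ⟩ := exists_lift_pair_saving hp q hab ha hb hda hdb hα hσ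
  have hne {v : V} (hv : v ∈ U) : v ≠ a ∧ v ≠ b :=
    ⟨fun e => ha (e ▸ hv), fun e => hb (e ▸ hv)⟩
  have hmem {v : V} (hv : v ∈ U) : v ∉ ({a, b} : Set V) := by simpa using hne hv
  have hρβ : Set.EqOn (run α ρ) β U := fun u hu => by
    rw [← hσβ hu, ← hρσ, run_filter_notMem_apply _ (hmem hu)]
  obtain ⟨τ, hτ, hτβ, haτ, hbτ, hUτ⟩ := exists_finish_pair hab.ne (by omega) hβ hρβ
  refine ⟨ρ ++ τ, isLegal_append.2 ⟨hρ, hτ⟩, by rwa [run_append], ?_⟩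
  rintro u (rfl | rfl | hu)
  · refine Order.lt_add_one_iff.1 (Nat.lt_of_mul_lt_mul_left (a := p) ?_)
    have := hlen u
    simp only [moveCount_append, haτ, mul_add]
    omega
  · refine Order.lt_add_one_iff.1 (Nat.lt_of_mul_lt_mul_left (a := p) ?_)
    have := hlen u
    simp only [moveCount_append, hbτ, mul_add]
    omega
  · have huρ := moveCount_filter_notMem _ (hmem hu) ρ
    rw [hρσ] at huρ
    rw [moveCount_append, hUτ u (hne hu).1 (hne hu).2, ← huρ]
    exact hcount u hu

end Budgets

section Complements

variable {G : SimpleGraph V} [G.LocallyFinite] {L : V → Finset C} {α β : V → C}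
  {κ : V → ℕ} {k : ℕ} {a b x : V} {M : Set V}

theorem insert_compl_insert (ha : a ∉ M) : insert a (insert a M)ᶜ = Mᶜ := by
  ext v
  by_cases hv : v = a <;> simp [hv, ha]

variable [DecidableEq V]

theorem HasRecoloring.compl_of_compl_insert (hκ : ∀ v, κ v ≤ k) (ha : a ∉ M)
    (hL : 10 ≤ #(L a)) (hd : #(neighborsIn G a (insert a M)ᶜ) ≤ 4)
    (hκa : 4 * k + 5 ≤ 5 * κ a) (hα : IsListColoringOn G L Set.univ α)
    (hβ : IsListColoringOn G L Set.univ β) (h : HasRecoloring G L α β κ (insert a M)ᶜ) :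
    HasRecoloring G L α β κ Mᶜ := by
  have hsum := sum_neighborsIn_le hκ hd
  rw [← insert_compl_insert ha]
  exact h.insert_vertex (p := 5) (by omega) (by simp) (by omega) (hα.mono (Set.subset_univ _))
    (hβ.mono (Set.subset_univ _)) (by omega)

theorem HasRecoloring.compl_of_compl_insert_insert (hκ : ∀ v, κ v ≤ k) (hab : G.Adj a b)
    (ha : a ∉ M) (hb : b ∉ M) (hLa : 10 ≤ #(L a)) (hLb : 10 ≤ #(L b))
    (hda : #(neighborsIn G a (insert a (insert b M))ᶜ) ≤ 4)
    (hdb : #(neighborsIn G b (insert a (insert b M))ᶜ) ≤ 4) (hκa : κ a = k) (hκb : κ b = k)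
    (hbx : G.Adj b x) (hx : x ∉ insert a (insert b M)) (hκx : κ x + 15 ≤ k)
    (hα : IsListColoringOn G L Set.univ α) (hβ : IsListColoringOn G L Set.univ β)
    (h : HasRecoloring G L α β κ (insert a (insert b M))ᶜ) : HasRecoloring G L α β κ Mᶜ := by
  have hsa := sum_neighborsIn_le hκ hda
  have hsb := sum_neighborsIn_le_of_adj hκ hdb hbx hx
  have hM : insert b (insert a (insert a (insert b M))ᶜ) = Mᶜ := by
    rw [insert_compl_insert (by simp [ha, hab.ne]), insert_compl_insert hb]
  rw [← hM, Set.insert_comm]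
  -- The budget of `a` is met exactly: `4 * 4 + (4 * k - 5 * 4) + 4 = 4 * k`.
  exact h.insert_pair (p := 4) (by omega) 4 hab (by simp) (by simp) (by omega) (by omega)
    (hα.mono (Set.subset_univ _)) (hβ.mono (Set.subset_univ _)) (by omega) (by omega)

end Complements

section Conversions

variable {V : Type} {G : SimpleGraph V} {L : V → Finset ℕ} {α β γ : V → ℕ} {m : ℕ}

theorem recolorCount_succ (φ : Fin (m + 2) → V → ℕ) (v : V) :
    recolorCount φ v =
      recolorCount (fun i => φ i.succ) v + if φ 0 v ≠ φ 1 v then 1 else 0 :=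
  (Fin.card_filter_univ_succ' _).trans (add_comm _ _)

theorem isRecolSeq_tail {φ : Fin (m + 2) → V → ℕ} (h : IsRecolSeq G L φ α β) :
    IsRecolSeq G L (fun i => φ i.succ) (φ 1) β :=
  ⟨rfl, h.2.1, fun i => h.2.2.1 i.succ, fun i => h.2.2.2 i.succ⟩

theorem isRecolSeq_cons {φ : Fin (m + 1) → V → ℕ} (hα : IsLColoring G L α)
    (h : IsRecolSeq G L φ γ β) (hne : ∃! v, α v ≠ γ v) :
    IsRecolSeq G L (Fin.cons α φ : Fin (m + 2) → V → ℕ) α β := by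
  refine ⟨rfl, h.2.1, Fin.cases hα h.2.2.1, Fin.cases ?_ h.2.2.2⟩
  simpa [h.1] using hne

theorem isLColoring_iff : IsLColoring G L α ↔ IsListColoringOn G L Set.univ α :=
  ⟨fun h u _ => ⟨h.1 u, fun _ _ huw => h.2 huw⟩,
    fun h => ⟨fun u => (h u trivial).1, fun u w => (h u trivial).2 w trivial⟩⟩

variable [DecidableEq V]

theorem exists_isLegal_of_isRecolSeq {U : Set V} {φ : Fin (m + 1) → U → ℕ}
    (h : IsRecolSeq (G.induce U) (fun u => L u) φ (fun u => α u) (fun u => β u)) :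
    ∃ σ, IsLegal G L U α σ ∧ Set.EqOn (run α σ) β U ∧
      ∀ u : U, moveCount u.1 σ = recolorCount φ u := by
  induction m generalizing α with
  | zero =>
    refine ⟨[], trivial, fun u hu => ?_, fun u => by simp [recolorCount]⟩
    exact congrFun (h.1.symm.trans h.2.1) ⟨u, hu⟩
  | succ m ih =>
    obtain ⟨v, hv, huniq⟩ := h.2.2.2 0
    have hα (u : U) : φ 0 u = α u := congrFun h.1 u
    have heq {u : U} (hu : u ≠ v) : φ 0 u = φ 1 u := by_contra fun hne => hu (huniq u hne)
    have hupdate : φ 1 = fun u : U => Function.update α v (φ 1 v) u := by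
      ext u
      obtain rfl | hu := eq_or_ne u v
      · simp
      · simp [Subtype.coe_ne_coe.2 hu, ← hα, heq hu]
    have htail := isRecolSeq_tail h
    rw [hupdate] at htail
    obtain ⟨σ, hσ, hσβ, hcount⟩ := ih htail
    have hcan : CanRecolor G L U α v (φ 1 v) := by
      refine ⟨v.2, (h.2.2.1 1).1 v, fun u hu hvu => ?_⟩
      have huv : (⟨u, hu⟩ : U) ≠ v := fun e => hvu.ne' (congrArg Subtype.val e)
      rw [← hα ⟨u, hu⟩, heq huv]
      exact ((h.2.2.1 1).2 (show (G.induce U).Adj v ⟨u, hu⟩ from hvu)).symm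
    refine ⟨(v.1, φ 1 v) :: σ, ⟨hcan, hσ⟩, hσβ, fun u => ?_⟩
    rw [moveCount_cons, hcount, recolorCount_succ]
    congr 1
    obtain rfl | hu := eq_or_ne u v
    · simpa using hv
    · simp [Subtype.coe_ne_coe.2 hu.symm, heq hu]

/- Idle moves are dropped, so that consecutive colorings differ. -/
theorem exists_isRecolSeq_of_isLegal {σ : List (V × ℕ)} (hα : IsLColoring G L α)
    (hσ : IsLegal G L Set.univ α σ) :
    ∃ (m : ℕ) (φ : Fin (m + 1) → V → ℕ), IsRecolSeq G L φ α (run α σ) ∧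
      ∀ v, recolorCount φ v ≤ moveCount v σ := by
  induction σ generalizing α with
  | nil => exact ⟨0, fun _ => α, ⟨rfl, rfl, fun _ => hα, fun i => i.elim0⟩, by simp [recolorCount]⟩
  | cons move σ ih =>
    have hα' := isLColoring_iff.2 ((isLColoring_iff.1 hα).update hσ.1)
    obtain ⟨m, φ, hφ, hcount⟩ := ih hα' hσ.2
    obtain hidle | hmove := eq_or_ne (α move.1) move.2
    · refine ⟨m, φ, ?_, fun v => (hcount v).trans (by simp [moveCount_cons])⟩
      rw [run_cons, ← hidle, Function.update_eq_self]
      rwa [← hidle, Function.update_eq_self] at hφ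
    · have hne (v : V) : α v ≠ Function.update α move.1 move.2 v ↔ move.1 = v := by
        obtain rfl | hv := eq_or_ne v move.1
        · simpa using hmove
        · simp [hv, hv.symm]
      refine ⟨m + 1, Fin.cons α φ, isRecolSeq_cons hα hφ ⟨move.1, (hne _).2 rfl, fun v hv =>
        ((hne v).1 hv).symm⟩, fun v => ?_⟩
      rw [recolorCount_succ, moveCount_cons]
      refine Nat.add_le_add (hcount v) (le_of_eq ?_)
      simp only [Fin.cons_zero, Fin.cons_one, hφ.1, hne]

theorem HasRecoloring.of_isRecolSeq {κ : V → ℕ} {U : Set V} {φ : Fin (m + 1) → U → ℕ}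
    (h : IsRecolSeq (G.induce U) (fun u => L u) φ (fun u => α u) (fun u => β u))
    (hκ : ∀ u : U, recolorCount φ u ≤ κ u) : HasRecoloring G L α β κ U := by
  obtain ⟨σ, hσ, hσβ, hcount⟩ := exists_isLegal_of_isRecolSeq h
  exact ⟨σ, hσ, hσβ, fun v hv => (hcount ⟨v, hv⟩).trans_le (hκ ⟨v, hv⟩)⟩

theorem HasRecoloring.exists_isRecolSeq {κ : V → ℕ} (hα : IsLColoring G L α)
    (h : HasRecoloring G L α β κ Set.univ) :
    ∃ (m : ℕ) (φ : Fin (m + 1) → V → ℕ), IsRecolSeq G L φ α β ∧ ∀ v, recolorCount φ v ≤ κ v := by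
  obtain ⟨σ, hσ, hσβ, hcount⟩ := h
  obtain ⟨m, φ, hφ, hφσ⟩ := exists_isRecolSeq_of_isLegal hα hσ
  rw [(Set.eqOn_univ _ _).1 hσβ] at hφ
  exact ⟨m, φ, hφ, fun v => (hφσ v).trans (hcount v trivial)⟩

end Conversions

/-- The vertices `v1, v2, w1, w2, w3, w4, x` form the configuration of the theorem in `G`, with
the prescribed degrees as upper bounds. The vertices are listed in `nodup` in the order in which
they are put back into the graph. -/
structure IsConfiguration (G : SimpleGraph V) [G.LocallyFinite] (v1 v2 w1 w2 w3 w4 x : V) :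
    Prop where
  nodup : [x, w1, w2, w4, w3, v1, v2].Nodup
  adj_v1_v2 : G.Adj v1 v2
  adj_v1_w1 : G.Adj v1 w1
  adj_v1_w2 : G.Adj v1 w2
  adj_v1_w4 : G.Adj v1 w4
  adj_v2_w2 : G.Adj v2 w2
  adj_v2_w3 : G.Adj v2 w3
  adj_v2_w4 : G.Adj v2 w4
  adj_v2_x : G.Adj v2 x
  adj_w1_w2 : G.Adj w1 w2
  adj_w2_x : G.Adj w2 x
  adj_w3_x : G.Adj w3 x
  adj_w3_w4 : G.Adj w3 w4
  degree_v1_le : G.degree v1 ≤ 5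
  degree_v2_le : G.degree v2 ≤ 5
  degree_w1_le : G.degree w1 ≤ 6
  degree_w2_le : G.degree w2 ≤ 7
  degree_w3_le : G.degree w3 ≤ 6
  degree_w4_le : G.degree w4 ≤ 7
  degree_x_le : G.degree x ≤ 7

namespace IsConfiguration

variable {G : SimpleGraph V} [G.LocallyFinite] {v1 v2 w1 w2 w3 w4 x : V}

theorem card_neighborsIn_le (h : IsConfiguration G v1 v2 w1 w2 w3 w4 x) :
    #(neighborsIn G x {x, w1, w2, w4, w3, v1, v2}ᶜ) ≤ 4 ∧
      #(neighborsIn G w1 {w1, w2, w4, w3, v1, v2}ᶜ) ≤ 4 ∧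
      #(neighborsIn G w2 {w1, w2, w4, w3, v1, v2}ᶜ) ≤ 4 ∧
      #(neighborsIn G w4 {w4, w3, v1, v2}ᶜ) ≤ 4 ∧ #(neighborsIn G w3 {w4, w3, v1, v2}ᶜ) ≤ 4 ∧
      #(neighborsIn G v1 {v1, v2}ᶜ) ≤ 4 ∧ #(neighborsIn G v2 {v1, v2}ᶜ) ≤ 4 := by
  classical
  have hne := h.nodup
  simp only [List.nodup_cons, List.mem_cons, List.not_mem_nil, not_or, or_false] at hne
  refine ⟨card_neighborsIn_compl_le {w2, w3, v2} ?_ ?_, card_neighborsIn_compl_le {w2, v1} ?_ ?_,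
    card_neighborsIn_compl_le {w1, v1, v2} ?_ ?_, card_neighborsIn_compl_le {w3, v1, v2} ?_ ?_,
    card_neighborsIn_compl_le {w4, v2} ?_ ?_, card_neighborsIn_compl_le {v2} ?_ ?_,
    card_neighborsIn_compl_le {v1} ?_ ?_⟩
  · simp [h.adj_w2_x.symm, h.adj_w3_x.symm, h.adj_v2_x.symm]
  · simpa [hne] using h.degree_x_le
  · simp [h.adj_w1_w2, h.adj_v1_w1.symm]
  · simpa [hne] using h.degree_w1_le
  · simp [h.adj_w1_w2.symm, h.adj_v1_w2.symm, h.adj_v2_w2.symm]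
  · simpa [hne] using h.degree_w2_le
  · simp [h.adj_w3_w4.symm, h.adj_v1_w4.symm, h.adj_v2_w4.symm]
  · simpa [hne] using h.degree_w4_le
  · simp [h.adj_w3_w4, h.adj_v2_w3.symm]
  · simpa [hne] using h.degree_w3_le
  · simp [h.adj_v1_v2]
  · simpa using h.degree_v1_le
  · simp [h.adj_v1_v2.symm]
  · simpa using h.degree_v2_le

theorem hasRecoloring_univ [DecidableEq V] (h : IsConfiguration G v1 v2 w1 w2 w3 w4 x) {k : ℕ}
    (hk : 80 ≤ k) {L : V → Finset C} (hL : ∀ v ∈ [x, w1, w2, w4, w3, v1, v2], 10 ≤ #(L v))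
    {α β : V → C} (hα : IsListColoringOn G L Set.univ α) (hβ : IsListColoringOn G L Set.univ β)
    (hrec : HasRecoloring G L α β (fun _ => k) {x, w1, w2, w4, w3, v1, v2}ᶜ) :
    HasRecoloring G L α β (fun _ => k) Set.univ := by
  -- `(4 * k + 9) / 5` is `(4 * k + 5) / 5` rounded up, the number of moves that `x` needs.
  let κ : V → ℕ := Function.update (fun _ => k) x ((4 * k + 9) / 5)
  have hκx : κ x = (4 * k + 9) / 5 := Function.update_self ..
  have hκne {v : V} (hv : v ≠ x) : κ v = k := Function.update_of_ne hv ..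
  have hκ : ∀ v, κ v ≤ k := update_le_iff.2 ⟨by omega, fun _ _ => le_rfl⟩
  have hne := h.nodup
  simp only [List.nodup_cons, List.mem_cons, List.not_mem_nil, not_or, or_false] at hne
  have hw1x : w1 ≠ x := Ne.symm hne.1.1
  have hw4x : w4 ≠ x := Ne.symm hne.1.2.2.1
  have hv1x : v1 ≠ x := Ne.symm hne.1.2.2.2.2.1
  simp only [List.forall_mem_cons] at hL
  obtain ⟨hLx, hLw1, hLw2, hLw4, hLw3, hLv1, hLv2, -⟩ := hL
  obtain ⟨hdx, hdw1, hdw2, hdw4, hdw3, hdv1, hdv2⟩ := h.card_neighborsIn_le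
  have hrec_x : HasRecoloring G L α β κ {x, w1, w2, w4, w3, v1, v2}ᶜ :=
    hrec.mono fun v hv => (hκne fun hvx => hv (.inl hvx)).ge
  have hrec_w12 : HasRecoloring G L α β κ {w1, w2, w4, w3, v1, v2}ᶜ :=
    hrec_x.compl_of_compl_insert hκ (by simp [hne]) hLx hdx (by omega) hα hβ
  have hrec_w43 : HasRecoloring G L α β κ {w4, w3, v1, v2}ᶜ :=
    hrec_w12.compl_of_compl_insert_insert hκ h.adj_w1_w2 (by simp [hne]) (by simp [hne]) hLw1 hLw2
      hdw1 hdw2 (hκne hw1x) (hκne h.adj_w2_x.ne) h.adj_w2_x (by simp [hne]) (by omega) hα hβ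
  have hrec_v12 : HasRecoloring G L α β κ {v1, v2}ᶜ :=
    hrec_w43.compl_of_compl_insert_insert hκ h.adj_w3_w4.symm (by simp [hne]) (by simp [hne]) hLw4
      hLw3 hdw4 hdw3 (hκne hw4x) (hκne h.adj_w3_x.ne) h.adj_w3_x (by simp [hne]) (by omega)
      hα hβ
  rw [← insert_empty_eq v2] at hrec_v12 hdv1 hdv2
  rw [← Set.compl_empty]
  exact (hrec_v12.compl_of_compl_insert_insert hκ h.adj_v1_v2 (by simp) (by simp) hLv1 hLv2 hdv1
    hdv2 (hκne hv1x) (hκne h.adj_v2_x.ne) h.adj_v2_x (by simp [hne])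
    (by omega) hα hβ).mono fun v _ => hκ v

end IsConfiguration

end ListRecoloring

open ListRecoloring

theorem stmt_15_general {V : Type} {G : SimpleGraph V} [G.LocallyFinite] {k : ℕ} (hk : 80 ≤ k)
    {L : V → Finset ℕ} {α β : V → ℕ} (hα : IsLColoring G L α) (hβ : IsLColoring G L β)
    {v1 v2 w1 w2 w3 w4 x : V} (hconf : IsConfiguration G v1 v2 w1 w2 w3 w4 x)
    {S : Set V} (hS : S = {v1, v2, w1, w2, w3, w4, x}) (hL : ∀ u ∈ S, 10 ≤ (L u).card)
    (hrec : ∃ (m : ℕ) (φ : Fin (m + 1) → ↥(Sᶜ) → ℕ),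
      IsRecolSeq (G.induce Sᶜ) (fun u => L u.1) φ (fun u => α u.1) (fun u => β u.1) ∧
      ∀ u : ↥(Sᶜ), recolorCount φ u ≤ k) :
    ∃ (M : ℕ) (ψ : Fin (M + 1) → V → ℕ),
      IsRecolSeq G L ψ α β ∧ ∀ u : V, recolorCount ψ u ≤ k := by
  classical
  have hS_reorder : S = {x, w1, w2, w4, w3, v1, v2} := by grind
  obtain ⟨m, φ, hφ, hφk⟩ := hrec
  have hrec_compl : HasRecoloring G L α β (fun _ => k) Sᶜ := .of_isRecolSeq hφ hφk
  refine HasRecoloring.exists_isRecolSeq hα (hconf.hasRecoloring_univ hk (fun v hv => ?_)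
    (isLColoring_iff.1 hα) (isLColoring_iff.1 hβ) (hS_reorder ▸ hrec_compl))
  exact hL v (by simpa [hS_reorder] using hv)

/-- configuration RC of Fig. more-reduc (e): if `G` contains this configuration and `G − S` has a
`k`-good recoloring sequence between the restrictions of `α` and `β` (`k ≥ 416`),
then `G` has a `k`-good recoloring sequence from `α` to `β`. -/
theorem stmt_15 {V : Type} [Fintype V] [DecidableEq V]
    (G : SimpleGraph V) [DecidableRel G.Adj]
    (k : ℕ) (hk : 416 ≤ k)
    (L : V → Finset ℕ) (hL : ∀ u, (L u).card = 10)
    (α β : V → ℕ) (hα : IsLColoring G L α) (hβ : IsLColoring G L β)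
    (v1 v2 w1 w2 w3 w4 x : V) (hnodup : ([v1, v2, w1, w2, w3, w4, x] : List V).Nodup)
    (he1: G.Adj v1 v2)
    (he2: G.Adj v1 w1)
    (he3: G.Adj v1 w2)
    (he4: G.Adj v1 w4)
    (he5: G.Adj v2 w2)
    (he6: G.Adj v2 w3)
    (he7: G.Adj v2 w4)
    (he8: G.Adj v2 x)
    (he9: G.Adj w1 w2)
    (he10: G.Adj w2 x)
    (he11: G.Adj w3 x)
    (he12: G.Adj w3 w4)
    (hdv1 : G.degree v1 = 5)
    (hdv2 : G.degree v2 = 5)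
    (hdw1 : G.degree w1 = 6)
    (hdw2 : G.degree w2 = 7)
    (hdw3 : G.degree w3 = 6)
    (hdw4 : G.degree w4 = 7)
    (hdx : G.degree x = 7)
    (S : Set V) (hS : S = {v1, v2, w1, w2, w3, w4, x})
    (hrec : ∃ (m : ℕ) (φ : Fin (m + 1) → ↥(Sᶜ) → ℕ),
      IsRecolSeq (G.induce Sᶜ) (fun u => L u.1) φ (fun u => α u.1) (fun u => β u.1) ∧
      ∀ u : ↥(Sᶜ), recolorCount φ u ≤ k) :
    ∃ (M : ℕ) (ψ : Fin (M + 1) → V → ℕ),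
      IsRecolSeq G L ψ α β ∧ ∀ u : V, recolorCount ψ u ≤ k := by
  have hconf : IsConfiguration G v1 v2 w1 w2 w3 w4 x :=
    ⟨(List.Perm.nodup_iff (by grind)).2 hnodup, he1, he2, he3, he4, he5, he6, he7, he8, he9, he10,
      he11, he12, hdv1.le, hdv2.le, hdw1.le, hdw2.le, hdw3.le, hdw4.le, hdx.le⟩
  exact stmt_15_general (by omega) hα hβ hconf hS (fun u _ => (hL u).ge) hrec
end
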